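/- Assume m¹ is reversible and ergodic with respect to q. If F ⊂ E* is (m²,Q)-ergodic, then T₀(F) and T₁(F) are also (m²,Q)-ergodic. -/

import Mathlib

open MeasureTheory ProbabilityTheory Set Pointwise
open scoped ENNReal

noncomputable section

/-- The increasing affine map from `(-1,1)` onto the chord `E_u`. -/
def ellMap (γ u x : ℝ) : ℝ := -u * Real.cos γ + x * Real.sqrt (1 - u ^ 2 * Real.sin γ ^ 2)

/-- The inverse of `ellMap γ u`. -/
def ellInv (γ u y : ℝ) : ℝ := (y + u * Real.cos γ) / Real.sqrt (1 - u ^ 2 * Real.sin γ ^ 2)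

/-- The open elliptical region `E`. -/
def Eset (γ : ℝ) : Set (ℝ × ℝ) :=
  {p | p.1 ^ 2 + 2 * Real.cos γ * p.1 * p.2 + p.2 ^ 2 < 1}

/-- The state space `E* = E × {−1,1}`, realized inside `ℝ × ℝ × ℝ`. -/
def EstarSet (γ : ℝ) : Set (ℝ × ℝ × ℝ) :=
  {w | (w.1, w.2.1) ∈ Eset γ ∧ (w.2.2 = 1 ∨ w.2.2 = -1)}

/-- Uniform probability measure on `(-1,1)`. -/
def m1 : Measure ℝ := (2 : ℝ≥0∞)⁻¹ • volume.restrict (Ioo (-1 : ℝ) 1)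

/-- The probability measure `m²` on `E*`: normalized Lebesgue measure on `E` times
uniform measure on `{−1,1}`. -/
def m2 (γ : ℝ) : Measure (ℝ × ℝ × ℝ) :=
  ((((volume (Eset γ))⁻¹ • volume.restrict (Eset γ)).prod
      ((2 : ℝ≥0∞)⁻¹ • (Measure.dirac (1 : ℝ) + Measure.dirac (-1 : ℝ)))).map
    fun p => (p.1.1, p.1.2, p.2))

/-- `q` is a Markov kernel on `(-1,1)`. -/
def IsMarkovOnInterval (q : Kernel ℝ ℝ) : Prop :=
  IsMarkovKernel q ∧ ∀ x ∈ Ioo (-1 : ℝ) 1, q x (Ioo (-1 : ℝ) 1) = 1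

/-- The kernel `Q` of the alternating random walk, as a measure-valued function on the
state space. -/
def Qfun (γ : ℝ) (q : Kernel ℝ ℝ) : ℝ × ℝ × ℝ → Measure (ℝ × ℝ × ℝ) := fun w =>
  if w.2.2 = -1 then
    Measure.map (fun x => (ellMap γ w.2.1 x, w.2.1, (1 : ℝ))) (q (-ellInv γ w.2.1 w.1))
  else
    Measure.map (fun x => (w.1, ellMap γ w.1 x, (-1 : ℝ))) (q (-ellInv γ w.1 w.2.1))

/-- The kernel `Q†`. -/
def Qdag (γ : ℝ) (q : Kernel ℝ ℝ) : ℝ × ℝ × ℝ → Measure (ℝ × ℝ × ℝ) := fun w =>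
  if w.2.2 = 1 then
    Measure.map (fun x => (ellMap γ w.2.1 x, w.2.1, (-1 : ℝ)))
      ((q (ellInv γ w.2.1 w.1)).map (fun y => -y))
  else
    Measure.map (fun x => (w.1, ellMap γ w.1 x, (1 : ℝ)))
      ((q (ellInv γ w.1 w.2.1)).map (fun y => -y))

/-- Bounded continuous real-valued functions on a subset `S`. -/
def BddCtsOn {X : Type*} [TopologicalSpace X] (S : Set X) (f : X → ℝ) : Prop :=
  ContinuousOn f S ∧ ∃ C, ∀ x ∈ S, |f x| ≤ C

/-- `m¹` is a reversible measure for `q`. -/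
def Reversible1 (q : Kernel ℝ ℝ) : Prop :=
  ∀ j k : ℝ → ℝ, BddCtsOn (Ioo (-1 : ℝ) 1) j → BddCtsOn (Ioo (-1 : ℝ) 1) k →
    ∫ x, k x * ∫ y, j y ∂(q x) ∂m1 = ∫ x, j x * ∫ y, k y ∂(q x) ∂m1

/-- The `†`-operation on measure-valued functions on `(-1,1)`: `p†(x,A) := p(−x,−A)`. -/
def dag (p : ℝ → Measure ℝ) : ℝ → Measure ℝ := fun x => (p (-x)).map (fun y => -y)

/-- `m¹` is a `†`-reversible measure for `p`. -/
def DagReversible1 (p : ℝ → Measure ℝ) : Prop :=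
  ∀ j k : ℝ → ℝ, BddCtsOn (Ioo (-1 : ℝ) 1) j → BddCtsOn (Ioo (-1 : ℝ) 1) k →
    ∫ x, k x * ∫ y, j y ∂(p x) ∂m1 = ∫ x, j x * ∫ y, k y ∂(dag p x) ∂m1

/-- `m²` is a `†`-reversible measure for `Q`. -/
def DagReversible2 (γ : ℝ) (q : Kernel ℝ ℝ) : Prop :=
  ∀ f g : ℝ × ℝ × ℝ → ℝ, BddCtsOn (EstarSet γ) f → BddCtsOn (EstarSet γ) g →
    ∫ w, g w * ∫ w', f w' ∂(Qfun γ q w) ∂(m2 γ) =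
      ∫ w, f w * ∫ w', g w' ∂(Qdag γ q w) ∂(m2 γ)

/-- `μ` is an invariant measure for the transition function `p`. -/
def KInvariantMeasure {S : Type*} [MeasurableSpace S] (μ : Measure S) (p : S → Measure S) :
    Prop :=
  ∀ A : Set S, MeasurableSet A → ∫⁻ x, p x A ∂μ = μ A

/-- The set `A` is `(μ,p)`-invariant. -/
def KInvariantSet {S : Type*} [MeasurableSpace S] (μ : Measure S) (p : S → Measure S)
    (A : Set S) : Prop :=
  ∀ᵐ x ∂μ, x ∈ A → p x A = 1

/-- `μ` is an ergodic measure for the transition function `p`. -/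
def KErgodicMeasure {S : Type*} [MeasurableSpace S] (μ : Measure S) (p : S → Measure S) :
    Prop :=
  KInvariantMeasure μ p ∧
    ∀ A : Set S, MeasurableSet A → KInvariantSet μ p A → μ A = 0 ∨ μ A = 1

/-- The set `A` is `(μ,p)`-ergodic. -/
def KErgodicSet {S : Type*} [MeasurableSpace S] (μ : Measure S) (p : S → Measure S)
    (A : Set S) : Prop :=
  MeasurableSet A ∧ KInvariantSet μ p A ∧
    ∀ B : Set S, B ⊆ A → MeasurableSet B → KInvariantSet μ p B → μ B = 0 ∨ μ B = μ A

/-- `F⁺`: the slice of `F ⊆ E*` at `s = 1`. -/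
def Fplus (F : Set (ℝ × ℝ × ℝ)) : Set (ℝ × ℝ) := {p | (p.1, p.2, (1 : ℝ)) ∈ F}

/-- `F⁻`: the slice of `F ⊆ E*` at `s = −1`. -/
def Fminus (F : Set (ℝ × ℝ × ℝ)) : Set (ℝ × ℝ) := {p | (p.1, p.2, (-1 : ℝ)) ∈ F}

/-- `[G]^u ⊆ (−1,1)`. -/
def brU (γ : ℝ) (G : Set (ℝ × ℝ)) (u : ℝ) : Set ℝ :=
  {x | x ∈ Ioo (-1 : ℝ) 1 ∧ (u, ellMap γ u x) ∈ G}

/-- `[G]_v ⊆ (−1,1)`. -/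
def brV (γ : ℝ) (G : Set (ℝ × ℝ)) (v : ℝ) : Set ℝ :=
  {x | x ∈ Ioo (-1 : ℝ) 1 ∧ (ellMap γ v x, v) ∈ G}

/-- The map `T₀` on `E*`. -/
def T0 (γ : ℝ) (w : ℝ × ℝ × ℝ) : ℝ × ℝ × ℝ :=
  (-w.1 - 2 * w.2.1 * Real.cos γ, w.2.1, -w.2.2)

/-- The map `T₁` on `E*`. -/
def T1 (γ : ℝ) (w : ℝ × ℝ × ℝ) : ℝ × ℝ × ℝ :=
  (w.1, -w.2.1 - 2 * w.1 * Real.cos γ, -w.2.2)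

/-- The linear map `U_γ` taking `E` to the unit disk. -/
def Ugamma (γ : ℝ) (p : ℝ × ℝ) : ℝ × ℝ := (p.1 + p.2 * Real.cos γ, p.2 * Real.sin γ)

/-- `V(u,v,s) = s·|U_γ(u,v)|²`. -/
def Vfun (γ : ℝ) (w : ℝ × ℝ × ℝ) : ℝ :=
  w.2.2 * ((w.1 + w.2.1 * Real.cos γ) ^ 2 + (w.2.1 * Real.sin γ) ^ 2)


instance m1_prob : IsProbabilityMeasure m1 := by
  constructor
  simp only [m1, Measure.smul_apply, Measure.restrict_apply MeasurableSet.univ, univ_inter,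
    Real.volume_Ioo, smul_eq_mul]
  norm_num
  exact ENNReal.inv_mul_cancel (by norm_num) (by norm_num)

lemma rev_sets (q : Kernel ℝ ℝ) [IsMarkovKernel q] (hrev : Reversible1 q) {A B : Set ℝ}
    (hA : MeasurableSet A) (hB : MeasurableSet B) :
    ∫⁻ x in A, q x B ∂m1 = ∫⁻ x in B, q x A ∂m1 := by
  have key : m1 ⊗ₘ q = (m1 ⊗ₘ q).map Prod.swap := by
    apply Measure.ext_of_integral_mul_boundedContinuousFunction
    intro f g
    have hb : ∀ f : BoundedContinuousFunction ℝ ℝ, BddCtsOn (Ioo (-1 : ℝ) 1) f := by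
      intro f
      refine ⟨f.continuous.continuousOn, ‖f‖, fun x _ => ?_⟩
      have := f.norm_coe_le_norm x
      simpa using this
    have hIntg : ∀ f g : BoundedContinuousFunction ℝ ℝ,
        Integrable (fun p : ℝ × ℝ => f p.1 * g p.2) (m1 ⊗ₘ q) := by
      intro f g
      apply Integrable.of_bound (C := ‖f‖ * ‖g‖)
      · exact (by fun_prop : Continuous fun p : ℝ × ℝ => f p.1 * g p.2).aestronglyMeasurable
      · refine Filter.Eventually.of_forall fun p => ?_
        rw [norm_mul]
        exact mul_le_mul (f.norm_coe_le_norm _) (g.norm_coe_le_norm _) (norm_nonneg _)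
          (norm_nonneg _)
    rw [integral_map (by fun_prop)
      (by exact (by fun_prop : Continuous fun p : ℝ × ℝ => f p.1 * g p.2).aestronglyMeasurable)]
    simp only [Prod.fst_swap, Prod.snd_swap]
    rw [Measure.integral_compProd (hIntg f g)]
    simp_rw [mul_comm (f _) (g _)]
    have h2 := hIntg g f
    rw [Measure.integral_compProd h2]
    have := hrev g f (hb g) (hb f)
    simp only [integral_const_mul, integral_mul_const]
    rw [← this]
    simp only [mul_comm]
  have h : (m1 ⊗ₘ q) (A ×ˢ B) = ((m1 ⊗ₘ q).map Prod.swap) (A ×ˢ B) :=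
    congrArg (fun μ => μ (A ×ˢ B)) key
  rw [Measure.map_apply measurable_swap (hA.prod hB)] at h
  rw [preimage_swap_prod, Measure.compProd_apply_prod hA hB, Measure.compProd_apply_prod hB hA] at h
  exact h

/-- cyclic pair -/
def Cyc (q : Kernel ℝ ℝ) (A B : Set ℝ) : Prop :=
  (∀ᵐ x ∂m1, x ∈ A → q x B = 1) ∧ (∀ᵐ x ∂m1, x ∈ B → q x A = 1)

lemma Cyc.symm {q : Kernel ℝ ℝ} {A B : Set ℝ} (h : Cyc q A B) : Cyc q B A := ⟨h.2, h.1⟩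

lemma null_trans (q : Kernel ℝ ℝ) (hinv : KInvariantMeasure m1 (fun x => q x)) {Z : Set ℝ}
    (hZ : MeasurableSet Z) (h : m1 Z = 0) : ∀ᵐ x ∂m1, q x Z = 0 := by
  have := hinv Z hZ
  rw [h, lintegral_eq_zero_iff (q.measurable_coe hZ)] at this
  exact this

lemma cyc_congr (q : Kernel ℝ ℝ) (hinv : KInvariantMeasure m1 (fun x => q x))
    {A B A' B' : Set ℝ} (hB : MeasurableSet B) (hB' : MeasurableSet B')
    (hAA : A =ᵐ[m1] A') (hBB : B =ᵐ[m1] B') (h : ∀ᵐ x ∂m1, x ∈ A → q x B = 1) :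
    ∀ᵐ x ∂m1, x ∈ A' → q x B' = 1 := by
  have h0 : m1 (symmDiff B B') = 0 := by
    exact measure_symmDiff_eq_zero_iff.2 hBB
  have h1 := null_trans q hinv (hB.symmDiff hB') h0
  filter_upwards [h, h1, hAA] with x hx h1x hAx hxA'
  have hxA : x ∈ A := by
    have : (x ∈ A) = (x ∈ A') := hAx
    rw [this]; exact hxA'
  rw [← hx hxA]
  exact (measure_congr (measure_symmDiff_eq_zero_iff.1 h1x)).symm

lemma cyc_of (q : Kernel ℝ ℝ) [IsMarkovKernel q] (hrev : Reversible1 q) {A B : Set ℝ}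
    (hA : MeasurableSet A) (hB : MeasurableSet B) (h : ∀ᵐ x ∂m1, x ∈ A → q x B = 1)
    (hm : m1 A = m1 B) : Cyc q A B := by
  refine ⟨h, ?_⟩
  have h1 : ∫⁻ x in A, q x B ∂m1 = m1 A := by
    rw [setLIntegral_congr_fun_ae (g := fun _ => 1) hA h]
    simp
  have h2 : ∫⁻ x in B, q x A ∂m1 = m1 B := by rw [← rev_sets q hrev hA hB, h1, hm]
  have h3 : (fun x => q x A) =ᵐ[m1.restrict B] fun _ => 1 := by
    apply ae_eq_of_ae_le_of_lintegral_le
    · exact Filter.Eventually.of_forall fun x => prob_le_one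
    · rw [h2]; exact measure_ne_top _ _
    · fun_prop
    · rw [h2]; simp
  exact (ae_restrict_iff' hB).1 h3

lemma inv_le (q : Kernel ℝ ℝ) (hinv : KInvariantMeasure m1 (fun x => q x)) {A B : Set ℝ}
    (hA : MeasurableSet A) (hB : MeasurableSet B) (h : ∀ᵐ x ∂m1, x ∈ A → q x B = 1) :
    m1 A ≤ m1 B := by
  have h1 : ∫⁻ x in A, q x B ∂m1 = m1 A := by
    rw [setLIntegral_congr_fun_ae (g := fun _ => 1) hA h]
    simp
  rw [← h1, ← hinv B hB]
  exact setLIntegral_le_lintegral _ _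

lemma meas_inter_one {μ : Measure ℝ} [IsProbabilityMeasure μ] {A B : Set ℝ} 
    (hA : MeasurableSet A) (hB : MeasurableSet B) (h1 : μ A = 1) (h2 : μ B = 1) :
    μ (A ∩ B) = 1 := by
  rw [← prob_compl_eq_zero_iff (hA.inter hB), compl_inter]
  exact measure_union_null ((prob_compl_eq_zero_iff hA).2 h1) ((prob_compl_eq_zero_iff hB).2 h2)

lemma meas_one_mono {μ : Measure ℝ} [IsProbabilityMeasure μ] {A B : Set ℝ} 
    (h : A ⊆ B) (h1 : μ A = 1) : μ B = 1 :=
  le_antisymm prob_le_one (h1 ▸ measure_mono h)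

lemma cyc_tri (q : Kernel ℝ ℝ) [IsMarkovKernel q] 
    (herg : KErgodicMeasure m1 (fun x => q x)) {A B : Set ℝ}
    (hA : MeasurableSet A) (hB : MeasurableSet B) (h : Cyc q A B) :
    (m1 A = 0 ∧ m1 B = 0) ∨ (m1 A = 1 ∧ m1 B = 1) ∨ 
      (B =ᵐ[m1] Aᶜ ∧ m1 A ≠ 0 ∧ m1 A ≠ 1 ∧ m1 B ≠ 0 ∧ m1 B ≠ 1) := by
  have hle := inv_le q herg.1 hA hB h.1
  have hge := inv_le q herg.1 hB hA h.2
  have heq : m1 A = m1 B := le_antisymm hle hge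
  rw [← heq]
  by_cases h0 : m1 A = 0
  · exact Or.inl ⟨h0, h0⟩
  by_cases h1 : m1 A = 1
  · exact Or.inr (Or.inl ⟨h1, h1⟩)
  refine Or.inr (Or.inr ⟨?_, h0, h1, h0, h1⟩)
  have hu := herg.2 (A ∪ B) (hA.union hB) (by
    filter_upwards [h.1, h.2] with x hx1 hx2 hx
    rcases hx with hx | hx
    · exact meas_one_mono subset_union_right (hx1 hx)
    · exact meas_one_mono subset_union_left (hx2 hx))
  have hi := herg.2 (A ∩ B) (hA.inter hB) (by
    filter_upwards [h.1, h.2] with x hx1 hx2 hx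
    exact meas_inter_one hA hB (hx2 hx.2) (hx1 hx.1))
  have hu1 : m1 (A ∪ B) = 1 := by
    rcases hu with hu | hu
    · exact absurd (measure_mono_null subset_union_left hu) h0
    · exact hu
  have hi0 : m1 (A ∩ B) = 0 := by
    rcases hi with hi | hi
    · exact hi
    · exact absurd (meas_one_mono inter_subset_left hi) h1
  have e1 : ∀ᵐ x ∂m1, x ∈ A ∪ B := by
    rw [ae_iff]; exact (prob_compl_eq_zero_iff (hA.union hB)).2 hu1
  have e2 : ∀ᵐ x ∂m1, x ∉ A ∩ B := measure_eq_zero_iff_ae_notMem.1 hi0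
  filter_upwards [e1, e2] with x hx1 hx2
  have : (x ∈ B) = (x ∈ Aᶜ) := by
    simp only [mem_union, mem_inter_iff, mem_compl_iff, eq_iff_iff] at *
    tauto
  exact this

lemma cyc_unique (q : Kernel ℝ ℝ) [IsMarkovKernel q] 
    (herg : KErgodicMeasure m1 (fun x => q x)) {A B C D : Set ℝ}
    (hA : MeasurableSet A) (hB : MeasurableSet B) (hC : MeasurableSet C) (hD : MeasurableSet D)
    (h : Cyc q A B) (h' : Cyc q C D) (hAB : B =ᵐ[m1] Aᶜ) (hCD : D =ᵐ[m1] Cᶜ) :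
    B =ᵐ[m1] D ∨ B =ᵐ[m1] Dᶜ := by
  have hS := herg.2 ((A ∩ C) ∪ (B ∩ D)) ((hA.inter hC).union (hB.inter hD)) (by
    filter_upwards [h.1, h.2, h'.1, h'.2] with x h1 h2 h3 h4 hx
    rcases hx with hx | hx
    · exact meas_one_mono subset_union_right (meas_inter_one hB hD (h1 hx.1) (h3 hx.2))
    · exact meas_one_mono subset_union_left (meas_inter_one hA hC (h2 hx.1) (h4 hx.2)))
  rcases hS with hS | hS
  · right
    have e := measure_eq_zero_iff_ae_notMem.1 hS
    filter_upwards [e, hAB, hCD] with x hx h1 h2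
    have h1' : (x ∈ B) = (x ∈ Aᶜ) := h1
    have h2' : (x ∈ D) = (x ∈ Cᶜ) := h2
    have : (x ∈ B) = (x ∈ Dᶜ) := by
      simp only [mem_union, mem_inter_iff, mem_compl_iff, eq_iff_iff] at *
      tauto
    exact this
  · left
    have e : ∀ᵐ x ∂m1, x ∈ (A ∩ C) ∪ (B ∩ D) := by
      rw [ae_iff]; exact (prob_compl_eq_zero_iff ((hA.inter hC).union (hB.inter hD))).2 hS
    filter_upwards [e, hAB, hCD] with x hx h1 h2
    have h1' : (x ∈ B) = (x ∈ Aᶜ) := h1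
    have h2' : (x ∈ D) = (x ∈ Cᶜ) := h2
    have : (x ∈ B) = (x ∈ D) := by
      simp only [mem_union, mem_inter_iff, mem_compl_iff, eq_iff_iff] at *
      tauto
    exact this


/-- Density of the projection of Lebesgue measure on `E` to a coordinate axis. -/
def kap (γ : ℝ) : Measure ℝ :=
  volume.withDensity (fun v => ENNReal.ofReal (2 * Real.sqrt (1 - v ^ 2 * Real.sin γ ^ 2)))

instance kap_sf (γ : ℝ) : SFinite (kap γ) := by unfold kap; infer_instance

/-- the chart -/
def chart (γ : ℝ) (p : ℝ × ℝ) : ℝ × ℝ := (ellMap γ p.1 p.2, p.1)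

lemma measurable_ellMap (γ : ℝ) : Measurable (fun p : ℝ × ℝ => ellMap γ p.1 p.2) := by
  unfold ellMap; fun_prop

lemma measurable_ellInv (γ : ℝ) : Measurable (fun p : ℝ × ℝ => ellInv γ p.1 p.2) := by
  unfold ellInv; fun_prop

lemma measurable_chart (γ : ℝ) : Measurable (chart γ) := by
  unfold chart; exact (measurable_ellMap γ).prodMk measurable_fst

lemma isOpen_E (γ : ℝ) : IsOpen (Eset γ) := by
  unfold Eset; exact isOpen_lt (by fun_prop) (by fun_prop)

lemma E_swap (γ : ℝ) (u v : ℝ) : (u, v) ∈ Eset γ ↔ (v, u) ∈ Eset γ := by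
  simp only [Eset, mem_ofPred_eq]
  constructor <;> intro h <;> nlinarith

lemma rpos_of_mem_E {γ u v : ℝ} (h : (u, v) ∈ Eset γ) : 0 < 1 - v ^ 2 * Real.sin γ ^ 2 := by
  simp only [Eset, mem_ofPred_eq] at h
  rw [Real.sin_sq]
  nlinarith [sq_nonneg (u + Real.cos γ * v)]

lemma ell_mem_E {γ v : ℝ} (hv : 0 < 1 - v ^ 2 * Real.sin γ ^ 2) (x : ℝ) :
    (ellMap γ v x, v) ∈ Eset γ ↔ x ∈ Ioo (-1 : ℝ) 1 := by
  simp only [Eset, mem_ofPred_eq, ellMap, mem_Ioo]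
  have hs := Real.sq_sqrt hv.le
  set r := Real.sqrt (1 - v ^ 2 * Real.sin γ ^ 2)
  have hsc := Real.sin_sq γ
  have : (-v * Real.cos γ + x * r) ^ 2 + 2 * Real.cos γ * (-v * Real.cos γ + x * r) * v + v ^ 2
      = x ^ 2 * r ^ 2 + v ^ 2 * Real.sin γ ^ 2 := by rw [hsc]; ring
  rw [this, ← abs_lt, ← sq_lt_one_iff_abs_lt_one, hs]
  constructor
  · intro h; by_contra hx; push Not at hx; nlinarith
  · intro h; nlinarith

lemma ellMap_ellInv {γ v : ℝ} (hv : 0 < 1 - v ^ 2 * Real.sin γ ^ 2) (u : ℝ) :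
    ellMap γ v (ellInv γ v u) = u := by
  have : Real.sqrt (1 - v ^ 2 * Real.sin γ ^ 2) ≠ 0 := (Real.sqrt_pos.2 hv).ne'
  unfold ellMap ellInv; field_simp; ring

lemma ellInv_ellMap {γ v : ℝ} (hv : 0 < 1 - v ^ 2 * Real.sin γ ^ 2) (x : ℝ) :
    ellInv γ v (ellMap γ v x) = x := by
  have : Real.sqrt (1 - v ^ 2 * Real.sin γ ^ 2) ≠ 0 := (Real.sqrt_pos.2 hv).ne'
  unfold ellMap ellInv; field_simp; ring

lemma m1_apply {S : Set ℝ} (hS : MeasurableSet S) : 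
    m1 S = 2⁻¹ * volume (S ∩ Ioo (-1) 1) := by
  simp [m1, Measure.restrict_apply hS]

lemma vol_restrict_E (γ : ℝ) :
    volume.restrict (Eset γ) = ((kap γ).prod m1).map (chart γ) := by
  ext S hS
  rw [Measure.restrict_apply hS, Measure.map_apply (measurable_chart γ) hS,
    Measure.prod_apply (measurable_chart γ hS), Measure.volume_eq_prod,
    Measure.prod_apply_symm (hS.inter (isOpen_E γ).measurableSet), kap,
    lintegral_withDensity_eq_lintegral_mul _ (by fun_prop)
      (measurable_measure_prodMk_left (measurable_chart γ hS))]
  refine lintegral_congr fun v => ?_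
  simp only [Pi.mul_apply]
  have hm : MeasurableSet (Prod.mk v ⁻¹' (chart γ ⁻¹' S)) :=
    measurable_prodMk_left (measurable_chart γ hS)
  by_cases hv : 0 < 1 - v ^ 2 * Real.sin γ ^ 2
  · set r := Real.sqrt (1 - v ^ 2 * Real.sin γ ^ 2) with hr
    have hrpos : 0 < r := Real.sqrt_pos.2 hv
    have e1 : Prod.mk v ⁻¹' (chart γ ⁻¹' S) ∩ Ioo (-1) 1 =
        (fun x => x * r) ⁻¹' ((fun x => -v * Real.cos γ + x) ⁻¹'
          ((fun x => (x, v)) ⁻¹' (S ∩ Eset γ))) := by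
      ext x
      simp only [mem_inter_iff, mem_preimage, chart]
      rw [← ell_mem_E hv x]
      simp only [ellMap, hr]
    rw [m1_apply hm, e1, Real.volume_preimage_mul_right hrpos.ne', measure_preimage_add,
      abs_of_pos (inv_pos.2 hrpos), ENNReal.ofReal_mul (by norm_num), ← mul_assoc, ← mul_assoc]
    have : ENNReal.ofReal 2 * ENNReal.ofReal r * 2⁻¹ * ENNReal.ofReal r⁻¹ = 1 := by
      have e : ENNReal.ofReal r * ENNReal.ofReal r⁻¹ = 1 := by
        rw [← ENNReal.ofReal_mul hrpos.le, mul_inv_cancel₀ hrpos.ne', ENNReal.ofReal_one]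
      calc _ = (ENNReal.ofReal 2 * 2⁻¹) * (ENNReal.ofReal r * ENNReal.ofReal r⁻¹) := by ring
        _ = 1 := by rw [e]; simp [ENNReal.mul_inv_cancel]
    rw [this, one_mul]
  · have : (fun x => (x, v)) ⁻¹' (S ∩ Eset γ) = ∅ := by
      ext x
      simp only [mem_preimage, mem_inter_iff, mem_empty_iff_false, iff_false, not_and]
      intro _ h; exact hv (rpos_of_mem_E h)
    rw [this, Real.sqrt_eq_zero_of_nonpos (not_lt.1 hv)]
    simp

lemma vol_E_ne_top {γ : ℝ} (hγ : γ ∈ Ioo 0 Real.pi) : volume (Eset γ) ≠ ∞ := by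
  have hs : 0 < Real.sin γ := Real.sin_pos_of_mem_Ioo hγ
  have : Eset γ ⊆ Icc (-(1 / Real.sin γ)) (1 / Real.sin γ) ×ˢ
      Icc (-(1 / Real.sin γ)) (1 / Real.sin γ) := by
    have aux : ∀ u v, (u, v) ∈ Eset γ → v ∈ Icc (-(1 / Real.sin γ)) (1 / Real.sin γ) := by
      intro u v h
      have := rpos_of_mem_E h
      rw [mem_Icc, ← abs_le, le_div_iff₀ hs]
      have h2 : (|v| * Real.sin γ) ^ 2 ≤ 1 := by
        rw [mul_pow, sq_abs]; linarith
      nlinarith [mul_nonneg (abs_nonneg v) hs.le]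
    rintro ⟨u, v⟩ h
    exact ⟨aux v u ((E_swap γ u v).1 h), aux u v h⟩
  refine ne_top_of_le_ne_top ?_ (measure_mono this)
  exact (isCompact_Icc.prod isCompact_Icc).measure_ne_top

lemma kap_le (γ : ℝ) (S : Set ℝ) : kap γ S ≤ 2 * volume S := by
  have h : kap γ ≤ (2 : ℝ≥0∞) • volume := by
    unfold kap
    rw [← withDensity_const]
    apply withDensity_mono
    refine Filter.Eventually.of_forall fun v => ?_
    have : 2 * Real.sqrt (1 - v ^ 2 * Real.sin γ ^ 2) ≤ 2 := by
      have : Real.sqrt (1 - v ^ 2 * Real.sin γ ^ 2) ≤ 1 := by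
        rw [Real.sqrt_le_one]; nlinarith [sq_nonneg (v * Real.sin γ)]
      linarith
    calc _ ≤ ENNReal.ofReal 2 := ENNReal.ofReal_le_ofReal this
      _ = 2 := by simp
  exact h S

lemma kap_ae_pos (γ : ℝ) : ∀ᵐ v ∂(kap γ), 0 < 1 - v ^ 2 * Real.sin γ ^ 2 := by
  unfold kap
  rw [ae_withDensity_iff (by fun_prop)]
  refine Filter.Eventually.of_forall fun v h => ?_
  by_contra hv
  rw [Real.sqrt_eq_zero_of_nonpos (not_lt.1 hv)] at h
  simp at h

lemma m1_ae_Ioo : ∀ᵐ x ∂m1, x ∈ Ioo (-1 : ℝ) 1 := by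
  unfold m1
  exact Measure.ae_smul_measure (ae_restrict_mem measurableSet_Ioo) _

lemma ae_neg_kap {γ : ℝ} {p : ℝ → Prop} (h : ∀ᵐ v ∂(kap γ), p v) : ∀ᵐ v ∂(kap γ), p (-v) := by
  unfold kap at *
  rw [ae_withDensity_iff (by fun_prop)] at *
  have := (Measure.measurePreserving_neg (volume : Measure ℝ)).quasiMeasurePreserving.ae h
  filter_upwards [this] with v hv h
  apply hv
  simpa using h

lemma mp_neg_m1 : MeasurePreserving (fun x : ℝ => -x) m1 m1 := by
  unfold m1
  have h : MeasurePreserving (fun x : ℝ => -x) (volume.restrict (Ioo (-1 : ℝ) 1))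
    (volume.restrict (Ioo (-1 : ℝ) 1)) := by
    have := (Measure.measurePreserving_neg (volume : Measure ℝ)).restrict_preimage
      (measurableSet_Ioo (a := (-1 : ℝ)) (b := 1))
    simpa using this
  exact h.smul_measure _

lemma ae_neg_m1 {p : ℝ → Prop} (h : ∀ᵐ v ∂m1, p v) : ∀ᵐ v ∂m1, p (-v) :=
  mp_neg_m1.quasiMeasurePreserving.ae h

lemma ae_E_to {γ : ℝ} {p : ℝ × ℝ → Prop} (h : ∀ᵐ z ∂(volume.restrict (Eset γ)), p z) :
    ∀ᵐ v ∂(kap γ), ∀ᵐ x ∂m1, p (ellMap γ v x, v) := by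
  rw [vol_restrict_E] at h
  exact Measure.ae_ae_of_ae_prod (ae_of_ae_map (measurable_chart γ).aemeasurable h)

lemma ae_E_of {γ : ℝ} {p : ℝ × ℝ → Prop} (hp : MeasurableSet {z | p z})
    (h : ∀ᵐ v ∂(kap γ), ∀ᵐ x ∂m1, p (ellMap γ v x, v)) :
    ∀ᵐ z ∂(volume.restrict (Eset γ)), p z := by
  rw [vol_restrict_E, ae_map_iff (measurable_chart γ).aemeasurable hp]
  exact (Measure.ae_prod_iff_ae_ae (measurable_chart γ hp)).2 h

lemma mp_swap_E (γ : ℝ) : MeasurePreserving (Prod.swap : ℝ × ℝ → ℝ × ℝ)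
    (volume.restrict (Eset γ)) (volume.restrict (Eset γ)) := by
  have h : MeasurePreserving (Prod.swap : ℝ × ℝ → ℝ × ℝ) volume volume := by
    rw [Measure.volume_eq_prod]; exact Measure.measurePreserving_swap
  have := h.restrict_preimage (isOpen_E γ).measurableSet
  have e : Prod.swap ⁻¹' (Eset γ) = Eset γ := by
    ext ⟨u, v⟩; exact (E_swap γ u v).symm
  rwa [e] at this

/-- reflection in the first coordinate -/
def refl0 (γ : ℝ) (p : ℝ × ℝ) : ℝ × ℝ := (-p.1 - 2 * p.2 * Real.cos γ, p.2)

lemma measurable_refl0 (γ : ℝ) : Measurable (refl0 γ) := by unfold refl0; fun_prop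

lemma refl0_ell (γ v x : ℝ) : refl0 γ (ellMap γ v x, v) = (ellMap γ v (-x), v) := by
  simp only [refl0, ellMap, Prod.mk.injEq, and_true]; ring

lemma mp_refl0_E (γ : ℝ) : MeasurePreserving (refl0 γ)
    (volume.restrict (Eset γ)) (volume.restrict (Eset γ)) := by
  refine ⟨measurable_refl0 γ, ?_⟩
  conv_lhs => rw [vol_restrict_E]
  rw [Measure.map_map (measurable_refl0 γ) (measurable_chart γ)]
  have e : refl0 γ ∘ chart γ = chart γ ∘ (Prod.map id (fun x => -x)) := by
    ext p : 1
    obtain ⟨v, x⟩ := p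
    simp [chart, refl0_ell]
  rw [e, ← Measure.map_map (measurable_chart γ) (by fun_prop)]
  have := (MeasurePreserving.id (kap γ)).prod mp_neg_m1
  rw [this.map_eq, ← vol_restrict_E]



open Filter Topology in
lemma tendsto_sym {a b : ℝ} {c0 ε δ σ : ℝ} (hε : 0 < ε) (hδ : 0 < δ) (hσ : |σ| = 1)
    (φ φ' : ℝ → ℝ → ℝ)
    (hd : ∀ c, |c - c0| < ε → ∀ v ∈ Ioo a b, HasDerivAt (φ c) (φ' c v) v)
    (hd' : ∀ c, |c - c0| < ε → ∀ v ∈ Ioo a b, δ ≤ σ * φ' c v)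
    (hc : ∀ v ∈ Ioo a b, ContinuousAt (fun c => φ c v) c0)
    (hm : ∀ c, Measurable (φ c))
    {S : Set ℝ} (hS : MeasurableSet S) (hSf : volume S ≠ ∞) :
    Tendsto (fun c => volume (Ioo a b ∩ {v | ¬ (φ c v ∈ S ↔ φ c0 v ∈ S)})) (𝓝 c0) (𝓝 0) := by
  -- change of variables bound
  have cov : ∀ c, |c - c0| < ε → ∀ w : ℝ → ℝ≥0∞, 
      ENNReal.ofReal δ * ∫⁻ v in Ioo a b, w (φ c v) ≤ ∫⁻ y, w y := by
    intro c hcε w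
    have hinj : InjOn (φ c) (Ioo a b) := by
      have hmono : StrictMonoOn (fun v => σ * φ c v) (Ioo a b) := by
        apply strictMonoOn_of_deriv_pos (convex_Ioo a b)
        · intro v hv
          exact ((hd c hcε v hv).const_mul σ).continuousAt.continuousWithinAt
        · intro v hv
          rw [interior_Ioo] at hv
          rw [((hd c hcε v hv).const_mul σ).deriv]
          exact lt_of_lt_of_le hδ (hd' c hcε v hv)
      intro x hx y hy hxy
      exact hmono.injOn hx hy (by simp only [hxy])
    have h1 := lintegral_image_eq_lintegral_abs_deriv_mul measurableSet_Ioo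
      (fun v hv => (hd c hcε v hv).hasDerivWithinAt) hinj w
    calc ENNReal.ofReal δ * ∫⁻ v in Ioo a b, w (φ c v) 
        = ∫⁻ v in Ioo a b, ENNReal.ofReal δ * w (φ c v) := by
          rw [lintegral_const_mul' _ _ ENNReal.ofReal_ne_top]
      _ ≤ ∫⁻ v in Ioo a b, ENNReal.ofReal |φ' c v| * w (φ c v) := by
          apply setLIntegral_mono' measurableSet_Ioo
          intro v hv
          gcongr
          calc δ ≤ σ * φ' c v := hd' c hcε v hv
            _ ≤ |σ * φ' c v| := le_abs_self _
            _ = |φ' c v| := by rw [abs_mul, hσ, one_mul]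
      _ = ∫⁻ y in φ c '' Ioo a b, w y := h1.symm
      _ ≤ ∫⁻ y, w y := setLIntegral_le_lintegral _ _
  rw [ENNReal.tendsto_nhds_zero]
  intro η hη
  set g : ℝ → ℝ := S.indicator (fun _ => 1) with hg
  have hgm : Measurable g := measurable_const.indicator hS
  have hgi : Integrable g := (integrable_indicator_iff hS).2 (by
    exact integrableOn_const hSf)
  set η' := min η 1 with hη'
  have hη'0 : η' ≠ 0 := by
    rw [hη']; exact (lt_min hη one_pos).ne'
  have hη't : η' ≠ ∞ := ne_top_of_le_ne_top ENNReal.one_ne_top (min_le_right _ _)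
  set K := ENNReal.ofReal δ with hK
  have hK0 : K ≠ 0 := by simp [hK, hδ]
  have hKt : K ≠ ∞ := ENNReal.ofReal_ne_top
  obtain ⟨g', hg'c, hg'le, hg'cont, -⟩ := hgi.exists_hasCompactSupport_lintegral_sub_le
    (ε := K * (η' / 4)) (by
      apply mul_ne_zero hK0
      exact (ENNReal.div_pos hη'0 (by norm_num)).ne')
  have happ : ∀ c, |c - c0| < ε → ∫⁻ v in Ioo a b, ‖g (φ c v) - g' (φ c v)‖ₑ ≤ η' / 4 := by
    intro c hcε
    have := (cov c hcε (fun y => ‖g y - g' y‖ₑ)).trans hg'le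
    exact (ENNReal.mul_le_mul_iff_right hK0 hKt).1 this
  obtain ⟨M, hM⟩ := hg'c.exists_bound_of_continuous hg'cont
  have hmid : Tendsto (fun c => ∫⁻ v in Ioo a b, ‖g' (φ c v) - g' (φ c0 v)‖ₑ) (𝓝 c0) (𝓝 0) := by
    have := tendsto_lintegral_filter_of_dominated_convergence (μ := volume.restrict (Ioo a b))
      (l := 𝓝 c0) (F := fun c v => ‖g' (φ c v) - g' (φ c0 v)‖ₑ) (f := fun _ => 0)
      (fun _ => ENNReal.ofReal (M + M)) 
      (Eventually.of_forall fun c => by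
        have h1 := hm c
        have h2 := hm c0
        have h3 := hg'cont.measurable
        exact ((h3.comp h1).sub (h3.comp h2)).enorm)
      (Eventually.of_forall fun c => Eventually.of_forall fun v => by
        rw [← ofReal_norm_eq_enorm]
        exact ENNReal.ofReal_le_ofReal ((norm_sub_le _ _).trans (add_le_add (hM _) (hM _))))
      (by
        rw [lintegral_const]
        apply ENNReal.mul_ne_top ENNReal.ofReal_ne_top
        simp)
      (by
        rw [ae_restrict_iff' measurableSet_Ioo]
        refine Eventually.of_forall fun v hv => ?_
        have h1 : ContinuousAt (fun c => ‖g' (φ c v) - g' (φ c0 v)‖ₑ) c0 := by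
          have : ContinuousAt (fun c => g' (φ c v)) c0 :=
            ContinuousAt.comp (f := fun c => φ c v) hg'cont.continuousAt (hc v hv)
          exact (this.sub continuousAt_const).enorm
        have h2 := h1.tendsto
        simpa using h2)
    simpa using this
  have hev : ∀ᶠ c in 𝓝 c0, |c - c0| < ε := by
    have := Metric.ball_mem_nhds c0 hε
    filter_upwards [this] with c hc
    rwa [Metric.mem_ball, Real.dist_eq] at hc
  have hmid' := (ENNReal.tendsto_nhds_zero.1 hmid) (η' / 4) (ENNReal.div_pos hη'0 (by norm_num))
  filter_upwards [hev, hmid'] with c hcε hcm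
  have hc0ε : |c0 - c0| < ε := by simpa using hε
  have hms : MeasurableSet {v | ¬ (φ c v ∈ S ↔ φ c0 v ∈ S)} := by
    have h1 : MeasurableSet {v | φ c v ∈ S} := hm c hS
    have h2 : MeasurableSet {v | φ c0 v ∈ S} := hm c0 hS
    exact (h1.iff h2).compl
  calc volume (Ioo a b ∩ {v | ¬ (φ c v ∈ S ↔ φ c0 v ∈ S)})
      = ∫⁻ v in Ioo a b, {v | ¬ (φ c v ∈ S ↔ φ c0 v ∈ S)}.indicator 1 v := by
        rw [lintegral_indicator_one hms, Measure.restrict_apply hms, inter_comm]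
    _ ≤ ∫⁻ v in Ioo a b, (‖g (φ c v) - g' (φ c v)‖ₑ + ‖g' (φ c v) - g' (φ c0 v)‖ₑ) + 
          ‖g (φ c0 v) - g' (φ c0 v)‖ₑ := by
        apply lintegral_mono
        intro v
        have tri : ‖g (φ c v) - g (φ c0 v)‖ₑ ≤ (‖g (φ c v) - g' (φ c v)‖ₑ + 
            ‖g' (φ c v) - g' (φ c0 v)‖ₑ) + ‖g (φ c0 v) - g' (φ c0 v)‖ₑ := by
          have e : g (φ c v) - g (φ c0 v) = ((g (φ c v) - g' (φ c v)) + 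
            (g' (φ c v) - g' (φ c0 v))) - (g (φ c0 v) - g' (φ c0 v)) := by ring
          rw [e]
          exact enorm_sub_le.trans (by gcongr; exact enorm_add_le _ _)
        refine le_trans ?_ tri
        by_cases hv : v ∈ {v | ¬ (φ c v ∈ S ↔ φ c0 v ∈ S)}
        · rw [indicator_of_mem hv]
          simp only [mem_ofPred_eq] at hv
          by_cases h1 : φ c v ∈ S <;> by_cases h2 : φ c0 v ∈ S <;> simp_all
        · rw [indicator_of_notMem hv]; exact zero_le
    _ = (∫⁻ v in Ioo a b, ‖g (φ c v) - g' (φ c v)‖ₑ) + 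
        (∫⁻ v in Ioo a b, ‖g' (φ c v) - g' (φ c0 v)‖ₑ) + 
          ∫⁻ v in Ioo a b, ‖g (φ c0 v) - g' (φ c0 v)‖ₑ := by
        have h3 := hg'cont.measurable
        have k1 : Measurable fun v => ‖g (φ c v) - g' (φ c v)‖ₑ := 
          ((hgm.comp (hm c)).sub (h3.comp (hm c))).enorm
        have k2 : Measurable fun v => ‖g' (φ c v) - g' (φ c0 v)‖ₑ := 
          ((h3.comp (hm c)).sub (h3.comp (hm c0))).enorm
        have k12 : Measurable fun v => ‖g (φ c v) - g' (φ c v)‖ₑ + ‖g' (φ c v) - g' (φ c0 v)‖ₑ :=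
          k1.add k2
        rw [lintegral_add_left k12, lintegral_add_left k1]
    _ ≤ η' / 4 + η' / 4 + η' / 4 := add_le_add (add_le_add (happ c hcε) hcm) (happ c0 hc0ε)
    _ ≤ η' / 4 + η' / 4 + η' / 4 + η' / 4 := le_self_add
    _ = η' := by
        have : η' / 4 + η' / 4 + η' / 4 + η' / 4 = 4 * (η' / 4) := by ring
        rw [this, ENNReal.mul_div_cancel (by norm_num) (by norm_num)]
    _ ≤ η := min_le_left _ _

lemma phi_deriv {γ v : ℝ} (c : ℝ) (hv : 0 < 1 - v ^ 2 * Real.sin γ ^ 2) :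
    HasDerivAt (fun v => ellMap γ v c)
      (-Real.cos γ - c * v * Real.sin γ ^ 2 / Real.sqrt (1 - v ^ 2 * Real.sin γ ^ 2)) v := by
  unfold ellMap
  have h1 : HasDerivAt (fun v : ℝ => 1 - v ^ 2 * Real.sin γ ^ 2) (-(2 * v * Real.sin γ ^ 2)) v := by
    have := (((hasDerivAt_id v).pow 2).mul_const (Real.sin γ ^ 2)).const_sub 1
    simpa using this
  have h2 := (h1.sqrt hv.ne').const_mul c
  have h3 := ((hasDerivAt_id v).neg.mul_const (Real.cos γ)).add h2
  refine (h3.congr_deriv ?_).congr_of_eventuallyEq ?_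
  · have : Real.sqrt (1 - v ^ 2 * Real.sin γ ^ 2) ≠ 0 := (Real.sqrt_pos.2 hv).ne'
    field_simp; ring
  · filter_upwards with w
    simp [mul_comm]

lemma chi_deriv {γ v c : ℝ} (hv : 0 < 1 - v ^ 2 * Real.sin γ ^ 2) (hc : c ∈ Ioo (-1 : ℝ) 1) :
    HasDerivAt (fun v => ellInv γ (ellMap γ v c) v)
      (Real.sin γ ^ 2 * (1 - c ^ 2) / Real.sqrt (1 - (ellMap γ v c) ^ 2 * Real.sin γ ^ 2) ^ 3) v := by
  have hE := (ell_mem_E hv c).2 hc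
  have hD := rpos_of_mem_E ((E_swap _ _ _).1 hE)
  have hr := Real.sqrt_pos.2 hv
  have hr2 := Real.sq_sqrt hv.le
  have hDs := Real.sqrt_pos.2 hD
  have hD2 := Real.sq_sqrt hD.le
  have hφ := phi_deriv c hv
  set p := -Real.cos γ - c * v * Real.sin γ ^ 2 / Real.sqrt (1 - v ^ 2 * Real.sin γ ^ 2) with hp
  have hn := (hasDerivAt_id v).add (hφ.mul_const (Real.cos γ))
  have h1 := ((hφ.pow 2).mul_const (Real.sin γ ^ 2)).const_sub 1
  have h2 := h1.sqrt hD.ne'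
  have h3 := hn.div h2 hDs.ne'
  refine (h3.congr_deriv ?_).congr_of_eventuallyEq ?_
  · have hφe : ellMap γ v c = -v * Real.cos γ + c * Real.sqrt (1 - v ^ 2 * Real.sin γ ^ 2) := rfl
    simp only [Pi.add_apply, id_eq, Pi.pow_apply]
    set f := ellMap γ v c
    set D := Real.sqrt (1 - f ^ 2 * Real.sin γ ^ 2)
    set r := Real.sqrt (1 - v ^ 2 * Real.sin γ ^ 2)
    have hpr : p * r = -Real.cos γ * r - c * v * Real.sin γ ^ 2 := by
      rw [hp]; field_simp
    have hsc := Real.sin_sq_add_cos_sq γ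
    have e1 : v * (p * r) - f * r = -c := by
      rw [hpr, hφe]; linear_combination (-c) * hr2
    have key0 : r * ((1 + p * Real.cos γ) * D ^ 2 + (v + f * Real.cos γ) * (f * p * Real.sin γ ^ 2))
        = r * (Real.sin γ ^ 2 * (1 - c ^ 2)) := by
      rw [hD2]
      have e2 : r * ((1 + p * Real.cos γ) * (1 - f ^ 2 * Real.sin γ ^ 2) + 
          (v + f * Real.cos γ) * (f * p * Real.sin γ ^ 2)) = 
          r + (p * r) * Real.cos γ + Real.sin γ ^ 2 * f * (v * (p * r) - f * r) := by ring
      rw [e2, e1, hpr, hφe]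
      linear_combination (-r) * hsc
    have key := mul_left_cancel₀ hr.ne' key0
    have hDne : D ≠ 0 := hDs.ne'
    simp only [Nat.cast_ofNat, Nat.reduceSub, pow_one]
    rw [← key]
    field_simp
    ring
  · filter_upwards with w
    simp [ellInv]



/-- The description of a set through three types of slices. -/
def Pm (U1 U2 U3 C : Set ℝ) (u x : ℝ) : Prop :=
  u ∈ U1 ∨ (u ∈ U2 ∧ x ∈ C) ∨ (u ∈ U3 ∧ x ∉ C)

lemma fin_vol_pos {γ : ℝ} (hγ : γ ∈ Ioo 0 Real.pi) :
    volume {u : ℝ | 0 < 1 - u ^ 2 * Real.sin γ ^ 2} ≠ ∞ := by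
  have hs : 0 < Real.sin γ := Real.sin_pos_of_mem_Ioo hγ
  have : {u : ℝ | 0 < 1 - u ^ 2 * Real.sin γ ^ 2} ⊆ Icc (-(1 / Real.sin γ)) (1 / Real.sin γ) := by
    intro v this
    simp only [mem_ofPred_eq] at this
    rw [mem_Icc, ← abs_le, le_div_iff₀ hs]
    have h2 : (|v| * Real.sin γ) ^ 2 ≤ 1 := by
      rw [mul_pow, sq_abs]; linarith
    nlinarith [mul_nonneg (abs_nonneg v) hs.le]
  exact ne_top_of_le_ne_top isCompact_Icc.measure_ne_top (measure_mono this)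

lemma meas_slice {S : Set (ℝ × ℝ)} (hS : MeasurableSet S) :
    MeasurableSet {u : ℝ | ∀ᵐ x ∂m1, (u, x) ∈ S} := by
  have h := measurable_measure_prodMk_left (ν := m1) hS.compl
  have e : {u : ℝ | ∀ᵐ x ∂m1, (u, x) ∈ S} = {u | m1 (Prod.mk u ⁻¹' Sᶜ) = 0} := by
    ext u; rfl
  rw [e]
  exact h (measurableSet_singleton 0)

lemma prop_aux {a1 a2 a3 p c : Prop} (h1 : a1 → p) (h2 : a2 → (p ↔ c)) (h3 : a3 → (p ↔ ¬ c))
    (h4 : ¬ p ∨ a1 ∨ a2 ∨ a3) : p ↔ a1 ∨ (a2 ∧ c) ∨ (a3 ∧ ¬ c) := by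
  by_cases a1 <;> by_cases a2 <;> by_cases a3 <;> by_cases p <;> by_cases c <;> simp_all

lemma reg_struct {γ : ℝ} (hγ : γ ∈ Ioo 0 Real.pi) {P : Set (ℝ × ℝ)} (hP : MeasurableSet P)
    {C : Set ℝ} (hC : MeasurableSet C)
    (H1 : ∀ᵐ u ∂(kap γ), (∀ᵐ x ∂m1, (u, ellMap γ u x) ∉ P) ∨ (∀ᵐ x ∂m1, (u, ellMap γ u x) ∈ P) ∨
      (∀ᵐ x ∂m1, ((u, ellMap γ u x) ∈ P ↔ x ∈ C)) ∨
      (∀ᵐ x ∂m1, ((u, ellMap γ u x) ∈ P ↔ x ∉ C))) :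
    ∃ U1 U2 U3 C' : Set ℝ, MeasurableSet U1 ∧ MeasurableSet U2 ∧ MeasurableSet U3 ∧
      MeasurableSet C' ∧ volume U1 ≠ ∞ ∧ volume U2 ≠ ∞ ∧ volume U3 ≠ ∞ ∧ volume C' ≠ ∞ ∧
      ∀ᵐ c ∂m1, ∀ᵐ v ∂(kap γ), ((ellMap γ v c, v) ∈ P ↔
        Pm U1 U2 U3 C' (ellMap γ v c) (ellInv γ (ellMap γ v c) v)) := by
  have hmap : Measurable (fun p : ℝ × ℝ => (p.1, ellMap γ p.1 p.2)) :=
    measurable_fst.prodMk (measurable_ellMap γ)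
  set R : Set ℝ := {u : ℝ | 0 < 1 - u ^ 2 * Real.sin γ ^ 2} with hR
  have hRm : MeasurableSet R := measurableSet_lt (by fun_prop) (by fun_prop)
  have hRf := fin_vol_pos hγ
  set U1 : Set ℝ := R ∩ {u | ∀ᵐ x ∂m1, (u, ellMap γ u x) ∈ P} with hU1
  set U2 : Set ℝ := R ∩ {u | ∀ᵐ x ∂m1, ((u, ellMap γ u x) ∈ P ↔ x ∈ C)} with hU2
  set U3 : Set ℝ := R ∩ {u | ∀ᵐ x ∂m1, ((u, ellMap γ u x) ∈ P ↔ x ∉ C)} with hU3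
  have hPm : MeasurableSet {p : ℝ × ℝ | (p.1, ellMap γ p.1 p.2) ∈ P} := hmap hP
  have hCm : MeasurableSet {p : ℝ × ℝ | p.2 ∈ C} := measurable_snd hC
  have m1' : MeasurableSet U1 := hRm.inter (meas_slice hPm)
  have m2' : MeasurableSet U2 := hRm.inter (meas_slice (hPm.iff hCm))
  have m3' : MeasurableSet U3 := hRm.inter (meas_slice (hPm.iff hCm.compl))
  have hC'm : MeasurableSet (C ∩ Ioo (-1) 1) := hC.inter measurableSet_Ioo
  have f : ∀ S : Set ℝ, volume (R ∩ S) ≠ ∞ := fun S =>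
    ne_top_of_le_ne_top hRf (measure_mono inter_subset_left)
  refine ⟨U1, U2, U3, C ∩ Ioo (-1) 1, m1', m2', m3', hC'm,
    f _, f _, f _, ne_top_of_le_ne_top (by simp) (measure_mono inter_subset_right), ?_⟩
  have hPmm : MeasurableSet {p : ℝ × ℝ | Pm U1 U2 U3 (C ∩ Ioo (-1) 1) p.1 p.2} := by
    have a1 : MeasurableSet {p : ℝ × ℝ | p.1 ∈ U1} := measurable_fst m1'
    have a2 : MeasurableSet {p : ℝ × ℝ | p.1 ∈ U2} := measurable_fst m2'
    have a3 : MeasurableSet {p : ℝ × ℝ | p.1 ∈ U3} := measurable_fst m3'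
    have a4 : MeasurableSet {p : ℝ × ℝ | p.2 ∈ C ∩ Ioo (-1) 1} := measurable_snd hC'm
    exact a1.union ((a2.inter a4).union (a3.inter a4.compl))
  have key : ∀ᵐ z ∂(volume.restrict (Eset γ)), (z.swap ∈ P ↔
      Pm U1 U2 U3 (C ∩ Ioo (-1) 1) z.2 (ellInv γ z.2 z.1)) := by
    apply ae_E_of
    · have b1 : MeasurableSet {z : ℝ × ℝ | z.swap ∈ P} := measurable_swap hP
      have b2 : Measurable (fun z : ℝ × ℝ => (z.2, ellInv γ z.2 z.1)) :=
        measurable_snd.prodMk ((measurable_ellInv γ).comp measurable_swap)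
      exact b1.iff (b2 hPmm)
    · filter_upwards [H1, kap_ae_pos γ] with u hu hpos
      have hu1 : ∀ᵐ x ∂m1, u ∈ U1 → (u, ellMap γ u x) ∈ P := by
        by_cases h : u ∈ U1
        · filter_upwards [h.2] with x hx _ using hx
        · exact Filter.Eventually.of_forall fun x h' => absurd h' h
      have hu2 : ∀ᵐ x ∂m1, u ∈ U2 → ((u, ellMap γ u x) ∈ P ↔ x ∈ C) := by
        by_cases h : u ∈ U2
        · filter_upwards [h.2] with x hx _ using hx
        · exact Filter.Eventually.of_forall fun x h' => absurd h' h
      have hu3 : ∀ᵐ x ∂m1, u ∈ U3 → ((u, ellMap γ u x) ∈ P ↔ x ∉ C) := by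
        by_cases h : u ∈ U3
        · filter_upwards [h.2] with x hx _ using hx
        · exact Filter.Eventually.of_forall fun x h' => absurd h' h
      have hu4 : ∀ᵐ x ∂m1, (u, ellMap γ u x) ∉ P ∨ u ∈ U1 ∨ u ∈ U2 ∨ u ∈ U3 := by
        rcases hu with h | h | h | h
        · filter_upwards [h] with x hx using Or.inl hx
        · exact Filter.Eventually.of_forall fun x => Or.inr (Or.inl ⟨hpos, h⟩)
        · exact Filter.Eventually.of_forall fun x => Or.inr (Or.inr (Or.inl ⟨hpos, h⟩))
        · exact Filter.Eventually.of_forall fun x => Or.inr (Or.inr (Or.inr ⟨hpos, h⟩))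
      filter_upwards [hu1, hu2, hu3, hu4, m1_ae_Ioo] with x h1 h2 h3 h4 h5
      have hx : x ∈ C ∩ Ioo (-1) 1 ↔ x ∈ C := ⟨fun h => h.1, fun h => ⟨h, h5⟩⟩
      simp only [Prod.swap_prod_mk, ellInv_ellMap hpos, Pm, hx]
      exact prop_aux h1 h2 h3 h4
  have key2 := (mp_swap_E γ).quasiMeasurePreserving.ae key
  have key3 := ae_E_to key2
  simp only [Prod.swap_swap, Prod.snd_swap, Prod.fst_swap] at key3
  rw [← Measure.ae_ae_comm]
  · exact key3
  · have b1 : Measurable (fun p : ℝ × ℝ => (ellMap γ p.1 p.2, p.1)) := measurable_chart γ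
    have b2 : Measurable (fun z : ℝ × ℝ => (z.1, ellInv γ z.1 z.2)) :=
        measurable_fst.prodMk (measurable_ellInv γ)
    exact (b1 hP).iff (b1 (b2 hPmm))

lemma crit_null {γ c0 : ℝ} (hγ : γ ∈ Ioo 0 Real.pi) (hc : c0 ≠ 0 ∨ Real.cos γ ≠ 0) :
    kap γ {v | 0 < 1 - v ^ 2 * Real.sin γ ^ 2 ∧
      -Real.cos γ - c0 * v * Real.sin γ ^ 2 / Real.sqrt (1 - v ^ 2 * Real.sin γ ^ 2) = 0} = 0 := by
  have hs : 0 < Real.sin γ := Real.sin_pos_of_mem_Ioo hγ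
  have hsub : {v | 0 < 1 - v ^ 2 * Real.sin γ ^ 2 ∧
      -Real.cos γ - c0 * v * Real.sin γ ^ 2 / Real.sqrt (1 - v ^ 2 * Real.sin γ ^ 2) = 0}.Subsingleton := by
    rintro v ⟨hv, hv0⟩ w ⟨hw, hw0⟩
    have rv := Real.sqrt_pos.2 hv
    have rw' := Real.sqrt_pos.2 hw
    have rv2 := Real.sq_sqrt hv.le
    have rw2 := Real.sq_sqrt hw.le
    set r := Real.sqrt (1 - v ^ 2 * Real.sin γ ^ 2)
    set t := Real.sqrt (1 - w ^ 2 * Real.sin γ ^ 2)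
    have hc0 : c0 ≠ 0 := by
      rcases hc with h | h
      · exact h
      · rintro rfl
        simp at hv0; exact h hv0
    have e1 : c0 * v * Real.sin γ ^ 2 / r = c0 * w * Real.sin γ ^ 2 / t := by linarith
    rw [div_eq_div_iff rv.ne' rw'.ne'] at e1
    have e2 : v * t = w * r := by
      have : c0 * Real.sin γ ^ 2 ≠ 0 := mul_ne_zero hc0 (pow_pos hs 2).ne'
      apply mul_left_cancel₀ this
      linarith
    have e3 : v ^ 2 = w ^ 2 := by
      have : (v * t) ^ 2 = (w * r) ^ 2 := by rw [e2]
      rw [mul_pow, mul_pow, rv2, rw2] at this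
      linarith
    have e4 : r = t := by
      simp only [r, t, e3]
    rw [e4] at e2
    exact mul_right_cancel₀ rw'.ne' e2
  have := kap_le γ _ |>.trans_eq (by rw [hsub.measure_zero, mul_zero])
  exact le_antisymm this zero_le



/-- The derivative of `v ↦ ellMap γ v c`. -/
def phid (γ c v : ℝ) : ℝ :=
  -Real.cos γ - c * v * Real.sin γ ^ 2 / Real.sqrt (1 - v ^ 2 * Real.sin γ ^ 2)

/-- The derivative of `v ↦ ellInv γ (ellMap γ v c) v`. -/
def chid (γ c v : ℝ) : ℝ :=
  Real.sin γ ^ 2 * (1 - c ^ 2) / Real.sqrt (1 - (ellMap γ v c) ^ 2 * Real.sin γ ^ 2) ^ 3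

open Filter Topology in
lemma phid_local {γ c0 v0 : ℝ} (hc0 : c0 ∈ Ioo (-1 : ℝ) 1)
    (hv0 : 0 < 1 - v0 ^ 2 * Real.sin γ ^ 2) (hne : phid γ c0 v0 ≠ 0) :
    ∃ ε > 0, ∃ δ > 0, ∃ σ : ℝ, |σ| = 1 ∧ ∀ c, |c - c0| < ε → ∀ v ∈ Ioo (v0 - ε) (v0 + ε),
      0 < 1 - v ^ 2 * Real.sin γ ^ 2 ∧ δ ≤ σ * phid γ c v ∧ (1 - c0 ^ 2) / 2 < 1 - c ^ 2 := by
  have hr := (Real.sqrt_pos.2 hv0).ne'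
  have hcont : ContinuousAt (fun p : ℝ × ℝ => phid γ p.1 p.2) (c0, v0) := by
    unfold phid
    apply ContinuousAt.sub continuousAt_const
    apply ContinuousAt.div (by fun_prop) (by fun_prop)
    exact hr
  obtain ⟨σ, hσ, hσp⟩ : ∃ σ : ℝ, |σ| = 1 ∧ 0 < σ * phid γ c0 v0 := by
    rcases lt_or_gt_of_ne hne with h | h
    · exact ⟨-1, by simp, by linarith⟩
    · exact ⟨1, by simp, by linarith⟩
  have e1 : ∀ᶠ p : ℝ × ℝ in 𝓝 (c0, v0), σ * phid γ c0 v0 / 2 < σ * phid γ p.1 p.2 :=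
    (continuousAt_const.mul hcont).eventually (lt_mem_nhds (half_lt_self hσp))
  have e2 : ∀ᶠ p : ℝ × ℝ in 𝓝 (c0, v0), 0 < 1 - p.2 ^ 2 * Real.sin γ ^ 2 := by
    have : ContinuousAt (fun p : ℝ × ℝ => 1 - p.2 ^ 2 * Real.sin γ ^ 2) (c0, v0) := by fun_prop
    exact this.eventually (lt_mem_nhds hv0)
  have hc1 : 0 < 1 - c0 ^ 2 := by nlinarith [hc0.1, hc0.2]
  have e3 : ∀ᶠ p : ℝ × ℝ in 𝓝 (c0, v0), (1 - c0 ^ 2) / 2 < 1 - p.1 ^ 2 := by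
    have : ContinuousAt (fun p : ℝ × ℝ => 1 - p.1 ^ 2) (c0, v0) := by fun_prop
    exact this.eventually (lt_mem_nhds (half_lt_self hc1))
  obtain ⟨ε, hε, hall⟩ := Metric.eventually_nhds_iff.1 (e1.and (e2.and e3))
  refine ⟨ε, hε, _, half_pos hσp, σ, hσ, fun c hc v hv => ?_⟩
  have := hall (y := (c, v)) (by
    rw [Prod.dist_eq, max_lt_iff, Real.dist_eq, Real.dist_eq]
    exact ⟨hc, abs_lt.2 ⟨by linarith [hv.1], by linarith [hv.2]⟩⟩)
  exact ⟨this.2.1, this.1.le, this.2.2⟩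

open Filter Topology in
lemma reg_local {γ : ℝ} (hγ : γ ∈ Ioo 0 Real.pi) {P : Set (ℝ × ℝ)} (hP : MeasurableSet P)
    {C D : Set ℝ} (hC : MeasurableSet C) (hD : MeasurableSet D)
    (H1 : ∀ᵐ u ∂(kap γ), (∀ᵐ x ∂m1, (u, ellMap γ u x) ∉ P) ∨ (∀ᵐ x ∂m1, (u, ellMap γ u x) ∈ P) ∨
      (∀ᵐ x ∂m1, ((u, ellMap γ u x) ∈ P ↔ x ∈ C)) ∨
      (∀ᵐ x ∂m1, ((u, ellMap γ u x) ∈ P ↔ x ∉ C)))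
    (H2 : kap γ {v | ∀ᵐ x ∂m1, ((ellMap γ v x, v) ∈ P ↔ x ∈ D)} ≠ 0)
    {c0 : ℝ} (hc0 : c0 ∈ Ioo (-1 : ℝ) 1) (hcc : c0 ≠ 0 ∨ Real.cos γ ≠ 0) :
    ∃ ε > 0, (∀ᵐ c ∂m1, |c - c0| < ε → c ∈ D) ∨ (∀ᵐ c ∂m1, |c - c0| < ε → c ∉ D) := by
  obtain ⟨U1, U2, U3, C', mU1, mU2, mU3, mC', fU1, fU2, fU3, fC', hmain⟩ := reg_struct hγ hP hC H1
  set Vp := {v | ∀ᵐ x ∂m1, ((ellMap γ v x, v) ∈ P ↔ x ∈ D)} with hVp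
  have hPmeas : MeasurableSet {p : ℝ × ℝ | (ellMap γ p.1 p.2, p.1) ∈ P ↔ p.2 ∈ D} := by
    have b1 : MeasurableSet {p : ℝ × ℝ | (ellMap γ p.1 p.2, p.1) ∈ P} := measurable_chart γ hP
    have b2 : MeasurableSet {p : ℝ × ℝ | p.2 ∈ D} := measurable_snd hD
    exact b1.iff b2
  have hVpm : MeasurableSet Vp := meas_slice hPmeas
  have hV : ∀ᵐ c ∂m1, ∀ᵐ v ∂(kap γ), v ∈ Vp → ((ellMap γ v c, v) ∈ P ↔ c ∈ D) := by
    rw [← Measure.ae_ae_comm]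
    · refine Eventually.of_forall fun v => ?_
      by_cases hv : v ∈ Vp
      · have : ∀ᵐ x ∂m1, ((ellMap γ v x, v) ∈ P ↔ x ∈ D) := hv
        filter_upwards [this] with x hx _ using hx
      · exact Eventually.of_forall fun x h => absurd h hv
    · have b3 : MeasurableSet {p : ℝ × ℝ | p.1 ∈ Vp} := measurable_fst hVpm
      have := b3.compl.union hPmeas
      convert this using 1
      ext p
      simp only [mem_ofPred_eq, mem_union, mem_compl_iff, imp_iff_not_or]
  -- choose the base point
  set W := Vp ∩ ({v | 0 < 1 - v ^ 2 * Real.sin γ ^ 2} ∩ {v | 0 < 1 - v ^ 2 * Real.sin γ ^ 2 ∧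
      -Real.cos γ - c0 * v * Real.sin γ ^ 2 / Real.sqrt (1 - v ^ 2 * Real.sin γ ^ 2) = 0}ᶜ) with hW
  have hW0 : kap γ W ≠ 0 := by
    have h1 := kap_ae_pos γ
    have h2 : ∀ᵐ v ∂(kap γ), v ∉ {v | 0 < 1 - v ^ 2 * Real.sin γ ^ 2 ∧
      -Real.cos γ - c0 * v * Real.sin γ ^ 2 / Real.sqrt (1 - v ^ 2 * Real.sin γ ^ 2) = 0} :=
      measure_eq_zero_iff_ae_notMem.1 (crit_null hγ hcc)
    have : W =ᵐ[kap γ] Vp := by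
      filter_upwards [h1, h2] with v hv1 hv2
      apply propext
      exact ⟨fun h => h.1, fun h => ⟨h, hv1, hv2⟩⟩
    rw [measure_congr this]; exact H2
  obtain ⟨v0, hv0W, hv0⟩ := exists_mem_forall_mem_nhdsWithin_pos_measure hW0
  have hne : phid γ c0 v0 ≠ 0 := fun h => hv0W.2.2 ⟨hv0W.2.1, h⟩
  obtain ⟨ε, hε, δ, hδ, σ, hσ, hall⟩ := phid_local hc0 hv0W.2.1 hne
  set J := Ioo (v0 - ε) (v0 + ε) with hJ
  have hM : 0 < kap γ (J ∩ Vp) := by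
    refine lt_of_lt_of_le (hv0 (J ∩ W) ?_) (measure_mono (inter_subset_inter_right _ inter_subset_left))
    rw [inter_comm]
    exact inter_mem_nhdsWithin _ (Ioo_mem_nhds (by linarith) (by linarith))
  have hMt : kap γ (J ∩ Vp) ≠ ∞ := by
    refine ne_top_of_le_ne_top ?_ ((measure_mono inter_subset_left).trans (kap_le γ J))
    exact ENNReal.mul_ne_top (by norm_num) (by simp [hJ])
  have hs : 0 < Real.sin γ := Real.sin_pos_of_mem_Ioo hγ
  have hc1 : 0 < 1 - c0 ^ 2 := by nlinarith [hc0.1, hc0.2]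
  have hcI : ∀ c, |c - c0| < ε → c ∈ Ioo (-1 : ℝ) 1 := by
    intro c hc
    have h := (hall c hc v0 ⟨by linarith, by linarith⟩).2.2
    constructor <;> nlinarith
  have hφm : ∀ c, Measurable (fun v => ellMap γ v c) := fun c => by unfold ellMap; fun_prop
  have hχm : ∀ c, Measurable (fun v => ellInv γ (ellMap γ v c) v) := fun c => by
    unfold ellInv ellMap; fun_prop
  have tφ : ∀ S : Set ℝ, MeasurableSet S → volume S ≠ ∞ → Tendsto (fun c => volume (J ∩ {v |
      ¬ (ellMap γ v c ∈ S ↔ ellMap γ v c0 ∈ S)})) (𝓝 c0) (𝓝 0) := by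
    intro S hS hSf
    refine tendsto_sym hε hδ hσ (fun c v => ellMap γ v c) (phid γ) ?_ ?_ ?_ hφm hS hSf
    · intro c hc v hv
      exact phi_deriv c (hall c hc v hv).1
    · intro c hc v hv
      exact (hall c hc v hv).2.1
    · intro v hv
      unfold ellMap; fun_prop
  have tχ : ∀ S : Set ℝ, MeasurableSet S → volume S ≠ ∞ → Tendsto (fun c => volume (J ∩ {v |
      ¬ (ellInv γ (ellMap γ v c) v ∈ S ↔ ellInv γ (ellMap γ v c0) v ∈ S)})) (𝓝 c0) (𝓝 0) := by
    intro S hS hSf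
    refine tendsto_sym hε (δ := Real.sin γ ^ 2 * ((1 - c0 ^ 2) / 2)) (by positivity) (σ := 1)
      (by simp) (fun c v => ellInv γ (ellMap γ v c) v) (chid γ) ?_ ?_ ?_ hχm hS hSf
    · intro c hc v hv
      exact chi_deriv (hall c hc v hv).1 (hcI c hc)
    · intro c hc v hv
      have hE := (ell_mem_E (hall c hc v hv).1 c).2 (hcI c hc)
      have hDp := rpos_of_mem_E ((E_swap _ _ _).1 hE)
      have hDs := Real.sqrt_pos.2 hDp
      have hD1 : Real.sqrt (1 - (ellMap γ v c) ^ 2 * Real.sin γ ^ 2) ≤ 1 := by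
        rw [Real.sqrt_le_one]; nlinarith [sq_nonneg (ellMap γ v c * Real.sin γ)]
      rw [one_mul, chid, le_div_iff₀ (by positivity)]
      have h3 := pow_le_one₀ (n := 3) hDs.le hD1
      have h4 := (hall c hc v hv).2.2
      calc _ ≤ Real.sin γ ^ 2 * ((1 - c0 ^ 2) / 2) * 1 := by gcongr
        _ ≤ _ := by rw [mul_one]; gcongr
    · intro v hv
      have hcε : |c0 - c0| < ε := by simpa using hε
      have hE := (ell_mem_E (hall c0 hcε v hv).1 c0).2 (hcI c0 hcε)
      have hDp := rpos_of_mem_E ((E_swap _ _ _).1 hE)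
      have hDs := (Real.sqrt_pos.2 hDp).ne'
      have h1 : ContinuousAt (fun c => ellMap γ v c) c0 := by unfold ellMap; fun_prop
      unfold ellInv
      apply ContinuousAt.div
      · fun_prop
      · fun_prop
      · exact hDs
  have tsum := (((tφ U1 mU1 fU1).add (tφ U2 mU2 fU2)).add (tφ U3 mU3 fU3)).add (tχ C' mC' fC')
  simp only [add_zero] at tsum
  have hpos : (0 : ℝ≥0∞) < kap γ (J ∩ Vp) / 4 / 2 :=
    ENNReal.div_pos (ENNReal.div_pos hM.ne' (by norm_num)).ne' (by norm_num)
  have hev := (ENNReal.tendsto_nhds_zero.1 tsum) _ hpos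
  obtain ⟨ε', hε', hall'⟩ := Metric.eventually_nhds_iff.1 hev
  set T : ℝ → Set ℝ := fun c => {v | Pm U1 U2 U3 C' (ellMap γ v c) (ellInv γ (ellMap γ v c) v)}
    with hT
  have hbad : ∀ c, |c - c0| < ε' → kap γ ((J ∩ Vp) ∩ {v | ¬ (v ∈ T c ↔ v ∈ T c0)}) <
      kap γ (J ∩ Vp) / 2 := by
    intro c hc
    have h := hall' (y := c) (by rw [Real.dist_eq]; exact hc)
    have hlt : kap γ (J ∩ Vp) / 4 < kap γ (J ∩ Vp) / 2 := by
      have : kap γ (J ∩ Vp) / 2 / 2 = kap γ (J ∩ Vp) / 4 := by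
        rw [ENNReal.div_eq_inv_mul, ENNReal.div_eq_inv_mul, ENNReal.div_eq_inv_mul, ← mul_assoc,
          ← ENNReal.mul_inv (by norm_num) (by norm_num)]
        norm_num
      rw [← this]
      exact ENNReal.half_lt_self (ENNReal.div_pos hM.ne' (by norm_num)).ne'
        (ENNReal.div_ne_top hMt (by norm_num))
    refine lt_of_le_of_lt ?_ hlt
    refine (kap_le γ _).trans ?_
    have hsub : (J ∩ Vp) ∩ {v | ¬ (v ∈ T c ↔ v ∈ T c0)} ⊆
      (((J ∩ {v | ¬ (ellMap γ v c ∈ U1 ↔ ellMap γ v c0 ∈ U1)}) ∪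
      (J ∩ {v | ¬ (ellMap γ v c ∈ U2 ↔ ellMap γ v c0 ∈ U2)})) ∪
      (J ∩ {v | ¬ (ellMap γ v c ∈ U3 ↔ ellMap γ v c0 ∈ U3)})) ∪
      (J ∩ {v | ¬ (ellInv γ (ellMap γ v c) v ∈ C' ↔ ellInv γ (ellMap γ v c0) v ∈ C')}) := by
      rintro v ⟨⟨hvJ, -⟩, hv⟩
      by_contra hcon
      simp only [mem_union, mem_inter_iff, mem_ofPred_eq, hvJ, true_and, not_or, not_not] at hcon
      obtain ⟨⟨⟨k1, k2⟩, k3⟩, k4⟩ := hcon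
      apply hv
      simp only [hT, mem_ofPred_eq, Pm, k1, k2, k3, k4]
    calc _ ≤ 2 * (kap γ (J ∩ Vp) / 4 / 2) := by
          gcongr
          refine (measure_mono hsub).trans ?_
          refine (measure_union_le _ _).trans (le_trans ?_ h)
          gcongr
          refine (measure_union_le _ _).trans ?_
          gcongr
          exact measure_union_le _ _
      _ = _ := ENNReal.mul_div_cancel (by norm_num) (by norm_num)
  refine ⟨ε', hε', ?_⟩
  by_cases hT0 : kap γ ((J ∩ Vp) ∩ T c0) < kap γ (J ∩ Vp) / 2
  · right
    filter_upwards [hmain, hV] with c h1 h2 hcε hcD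
    have : ((J ∩ Vp) \ T c0 : Set ℝ) ≤ᵐ[kap γ] ((J ∩ Vp) ∩ {v | ¬ (v ∈ T c ↔ v ∈ T c0)} : Set ℝ) := by
      filter_upwards [h1, h2] with v k1 k2 hv
      refine ⟨hv.1, fun hiff => hv.2 (hiff.1 (k1.1 ((k2 hv.1.2).2 hcD)))⟩
    have h3 := (measure_mono_ae this).trans_lt (hbad c hcε)
    have h4 := measure_le_inter_add_sdiff (kap γ) (J ∩ Vp) (T c0)
    have h5 := ENNReal.add_lt_add hT0 h3
    rw [ENNReal.add_halves] at h5
    exact absurd h5 (not_lt.2 h4)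
  · left
    filter_upwards [hmain, hV] with c h1 h2 hcε
    by_contra hcD
    have : ((J ∩ Vp) ∩ T c0 : Set ℝ) ≤ᵐ[kap γ] ((J ∩ Vp) ∩ {v | ¬ (v ∈ T c ↔ v ∈ T c0)} : Set ℝ) := by
      filter_upwards [h1, h2] with v k1 k2 hv
      refine ⟨hv.1, fun hiff => hcD ((k2 hv.1.2).1 (k1.2 (hiff.2 hv.2)))⟩
    exact hT0 ((measure_mono_ae this).trans_lt (hbad c hcε))

lemma m1_Ioo_pos {c ε : ℝ} (hc : c ∈ Ioo (-1 : ℝ) 1) (hε : 0 < ε) :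
    m1 {x | |x - c| < ε} ≠ 0 := by
  have ho : IsOpen ({x : ℝ | |x - c| < ε} ∩ Ioo (-1) 1) :=
    (isOpen_lt (by fun_prop) (by fun_prop)).inter isOpen_Ioo
  have hm : MeasurableSet {x : ℝ | |x - c| < ε} := measurableSet_lt (by fun_prop) (by fun_prop)
  rw [m1_apply hm]
  refine mul_ne_zero (by simp) (ho.measure_pos volume ⟨c, by simpa using hε, hc⟩).ne'

open Filter Topology in
lemma local_const {a b : ℝ} (hab : Ioo a b ⊆ Ioo (-1 : ℝ) 1) {D : Set ℝ}
    (h : ∀ c0 ∈ Ioo a b, ∃ ε > 0, (∀ᵐ c ∂m1, |c - c0| < ε → c ∈ D) ∨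
      (∀ᵐ c ∂m1, |c - c0| < ε → c ∉ D)) :
    (∀ᵐ c ∂m1, c ∈ Ioo a b → c ∈ D) ∨ (∀ᵐ c ∂m1, c ∈ Ioo a b → c ∉ D) := by
  have hopen : ∀ D : Set ℝ, IsOpen {c0 : ℝ | ∃ ε > 0, ∀ᵐ c ∂m1, |c - c0| < ε → c ∈ D} := by
    intro D
    rw [Metric.isOpen_iff]
    rintro c0 ⟨ε, hε, h⟩
    refine ⟨ε / 2, half_pos hε, fun c1 hc1 => ⟨ε / 2, half_pos hε, ?_⟩⟩
    rw [Metric.mem_ball, Real.dist_eq] at hc1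
    filter_upwards [h] with c hc hcc
    apply hc
    have := abs_add_le (c - c1) (c1 - c0)
    have e : c - c1 + (c1 - c0) = c - c0 := by ring
    rw [e] at this
    linarith
  have hfin : ∀ D : Set ℝ, Ioo a b ⊆ {c0 : ℝ | ∃ ε > 0, ∀ᵐ c ∂m1, |c - c0| < ε → c ∈ D} →
      ∀ᵐ c ∂m1, c ∈ Ioo a b → c ∈ D := by
    intro D hD
    have h0 : m1 (Ioo a b ∩ Dᶜ) = 0 := by
      apply measure_null_of_locally_null
      intro x hx
      obtain ⟨ε, hε, h⟩ := hD hx.1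
      refine ⟨{c | |c - x| < ε} ∩ Dᶜ, ?_, ?_⟩
      · apply Filter.inter_mem
        · apply mem_nhdsWithin_of_mem_nhds
          have := Metric.ball_mem_nhds x hε
          filter_upwards [this] with c hc
          rwa [Metric.mem_ball, Real.dist_eq] at hc
        · exact mem_of_superset self_mem_nhdsWithin inter_subset_right
      · rw [measure_eq_zero_iff_ae_notMem]
        filter_upwards [h] with c hc hcc
        exact hcc.2 (hc hcc.1)
    rw [measure_eq_zero_iff_ae_notMem] at h0
    filter_upwards [h0] with c hc hcI
    by_contra hcD
    exact hc ⟨hcI, hcD⟩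
  rcases isPreconnected_iff_subset_of_disjoint.1 (isPreconnected_Ioo (a := a) (b := b)) _ _
    (hopen D) (hopen Dᶜ) (by
      intro c0 hc0
      obtain ⟨ε, hε, h1 | h1⟩ := h c0 hc0
      · exact Or.inl ⟨ε, hε, h1⟩
      · exact Or.inr ⟨ε, hε, h1⟩) (by
      rw [eq_empty_iff_forall_notMem]
      rintro c0 ⟨hc0, ⟨ε, hε, h1⟩, ⟨ε', hε', h2⟩⟩
      apply m1_Ioo_pos (hab hc0) (lt_min hε hε')
      rw [measure_eq_zero_iff_ae_notMem]
      filter_upwards [h1, h2] with c k1 k2 hc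
      simp only [mem_ofPred_eq, lt_min_iff] at hc
      exact k2 hc.2 (k1 hc.1)) with h1 | h1
  · exact Or.inl (hfin D h1)
  · exact Or.inr (hfin Dᶜ h1)

/-- Conclusion of the regularity argument. -/
lemma reg_global {γ : ℝ} (hγ : γ ∈ Ioo 0 Real.pi) {P : Set (ℝ × ℝ)} (hP : MeasurableSet P)
    {C D : Set ℝ} (hC : MeasurableSet C) (hD : MeasurableSet D)
    (H1 : ∀ᵐ u ∂(kap γ), (∀ᵐ x ∂m1, (u, ellMap γ u x) ∉ P) ∨ (∀ᵐ x ∂m1, (u, ellMap γ u x) ∈ P) ∨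
      (∀ᵐ x ∂m1, ((u, ellMap γ u x) ∈ P ↔ x ∈ C)) ∨
      (∀ᵐ x ∂m1, ((u, ellMap γ u x) ∈ P ↔ x ∉ C)))
    (H2 : kap γ {v | ∀ᵐ x ∂m1, ((ellMap γ v x, v) ∈ P ↔ x ∈ D)} ≠ 0)
    (hD0 : m1 D ≠ 0) (hD1 : m1 D ≠ 1) :
    Real.cos γ = 0 ∧ ∀ᵐ x ∂m1, (-x ∈ D ↔ x ∉ D) := by
  have hno : ¬ ((∀ᵐ c ∂m1, c ∈ D) ∨ (∀ᵐ c ∂m1, c ∉ D)) := by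
    rintro (h | h)
    · exact hD1 ((prob_compl_eq_zero_iff hD).1 h)
    · exact hD0 (measure_eq_zero_iff_ae_notMem.2 h)
  have hcos : Real.cos γ = 0 := by
    by_contra hcos
    rcases local_const (Subset.refl _) (fun c0 hc0 => reg_local hγ hP hC hD H1 H2 hc0 (Or.inr hcos))
      with h | h
    · apply hno; left; filter_upwards [h, m1_ae_Ioo] with c h1 h2 using h1 h2
    · apply hno; right; filter_upwards [h, m1_ae_Ioo] with c h1 h2 using h1 h2
  refine ⟨hcos, ?_⟩
  have hz : ∀ᵐ x ∂m1, x ≠ 0 := by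
    have : m1 {0} = 0 := by rw [m1_apply (measurableSet_singleton 0)]
                            simp [measure_mono_null inter_subset_left Real.volume_singleton]
    filter_upwards [measure_eq_zero_iff_ae_notMem.1 this] with x hx using hx
  have hp := local_const (a := 0) (b := 1) (Ioo_subset_Ioo_left (by norm_num))
    (fun c0 hc0 => reg_local hγ hP hC hD H1 H2 ⟨by linarith [hc0.1], hc0.2⟩ (Or.inl hc0.1.ne'))
  have hn := local_const (a := -1) (b := 0) (Ioo_subset_Ioo_right (by norm_num))
    (fun c0 hc0 => reg_local hγ hP hC hD H1 H2 ⟨hc0.1, by linarith [hc0.2]⟩ (Or.inl hc0.2.ne))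
  have hcov : ∀ {x : ℝ}, x ∈ Ioo (-1 : ℝ) 1 → x ≠ 0 → x ∈ Ioo (-1 : ℝ) 0 ∨ x ∈ Ioo (0 : ℝ) 1 := by
    intro x hx h0
    rcases lt_or_gt_of_ne h0 with h | h
    · exact Or.inl ⟨hx.1, h⟩
    · exact Or.inr ⟨h, hx.2⟩
  have hneg1 : ∀ {x : ℝ}, x ∈ Ioo (-1 : ℝ) 0 → -x ∈ Ioo (0 : ℝ) 1 := by
    intro x hx; exact ⟨by linarith [hx.2], by linarith [hx.1]⟩
  have hneg2 : ∀ {x : ℝ}, x ∈ Ioo (0 : ℝ) 1 → -x ∈ Ioo (-1 : ℝ) 0 := by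
    intro x hx; exact ⟨by linarith [hx.2], by linarith [hx.1]⟩
  rcases hp with hp | hp <;> rcases hn with hn | hn
  · exfalso; apply hno; left
    filter_upwards [hp, hn, hz, m1_ae_Ioo] with x h1 h2 h3 h4
    rcases hcov h4 h3 with h | h
    · exact h2 h
    · exact h1 h
  · filter_upwards [hp, hn, ae_neg_m1 hp, ae_neg_m1 hn, hz, m1_ae_Ioo] with x h1 h2 h1' h2' h3 h4
    rcases hcov h4 h3 with h | h
    · exact iff_of_true (h1' (hneg1 h)) (h2 h)
    · exact iff_of_false (h2' (hneg2 h)) (not_not.2 (h1 h))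
  · filter_upwards [hp, hn, ae_neg_m1 hp, ae_neg_m1 hn, hz, m1_ae_Ioo] with x h1 h2 h1' h2' h3 h4
    rcases hcov h4 h3 with h | h
    · exact iff_of_false (h1' (hneg1 h)) (not_not.2 (h2 h))
    · exact iff_of_true (h2' (hneg2 h)) (h1 h)
  · exfalso; apply hno; right
    filter_upwards [hp, hn, hz, m1_ae_Ioo] with x h1 h2 h3 h4
    rcases hcov h4 h3 with h | h
    · exact h2 h
    · exact h1 h



/-- horizontal slice in the chart -/
def sl (γ : ℝ) (P : Set (ℝ × ℝ)) (v : ℝ) : Set ℝ := {x | (ellMap γ v x, v) ∈ P}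

/-- reflected horizontal slice in the chart -/
def sln (γ : ℝ) (P : Set (ℝ × ℝ)) (v : ℝ) : Set ℝ := {x | (ellMap γ v (-x), v) ∈ P}

/-- swapped set -/
def sw (P : Set (ℝ × ℝ)) : Set (ℝ × ℝ) := Prod.swap ⁻¹' P

/-- reflected set -/
def rf (γ : ℝ) (P : Set (ℝ × ℝ)) : Set (ℝ × ℝ) := refl0 γ ⁻¹' P

lemma meas_sw {P : Set (ℝ × ℝ)} (hP : MeasurableSet P) : MeasurableSet (sw P) := measurable_swap hP

lemma meas_rf {γ : ℝ} {P : Set (ℝ × ℝ)} (hP : MeasurableSet P) : MeasurableSet (rf γ P) :=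
  measurable_refl0 γ hP

lemma meas_sl {γ : ℝ} {P : Set (ℝ × ℝ)} (hP : MeasurableSet P) (v : ℝ) :
    MeasurableSet (sl γ P v) :=
  measurable_prodMk_left (measurable_chart γ hP)

lemma sln_eq (γ : ℝ) (P : Set (ℝ × ℝ)) (v : ℝ) : sln γ P v = (fun x => -x) ⁻¹' sl γ P v := rfl

lemma meas_sln {γ : ℝ} {P : Set (ℝ × ℝ)} (hP : MeasurableSet P) (v : ℝ) :
    MeasurableSet (sln γ P v) := by
  rw [sln_eq]; exact measurable_neg (meas_sl hP v)

lemma m1_sln {γ : ℝ} {P : Set (ℝ × ℝ)} (hP : MeasurableSet P) (v : ℝ) :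
    m1 (sln γ P v) = m1 (sl γ P v) := by
  rw [sln_eq]; exact mp_neg_m1.measure_preimage (meas_sl hP v).nullMeasurableSet

lemma sl_rf (γ : ℝ) (P : Set (ℝ × ℝ)) (v : ℝ) : sl γ (rf γ P) v = sln γ P v := by
  ext x
  simp only [sl, sln, rf, mem_ofPred_eq, mem_preimage, refl0_ell]

lemma sln_rf (γ : ℝ) (P : Set (ℝ × ℝ)) (v : ℝ) : sln γ (rf γ P) v = sl γ P v := by
  ext x
  simp only [sl, sln, rf, mem_ofPred_eq, mem_preimage, refl0_ell, neg_neg]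

lemma vol_sl {γ : ℝ} {P : Set (ℝ × ℝ)} (hP : MeasurableSet P) :
    volume.restrict (Eset γ) P = ∫⁻ v, m1 (sl γ P v) ∂(kap γ) := by
  rw [vol_restrict_E, Measure.map_apply (measurable_chart γ) hP,
    Measure.prod_apply (measurable_chart γ hP)]
  rfl

lemma measurable_m1_sl {γ : ℝ} {P : Set (ℝ × ℝ)} (hP : MeasurableSet P) :
    Measurable (fun v => m1 (sl γ P v)) :=
  measurable_measure_prodMk_left (measurable_chart γ hP)

/-- one-step inclusion -/
def HH (γ : ℝ) (q : Kernel ℝ ℝ) (P N : Set (ℝ × ℝ)) : Prop :=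
  ∀ᵐ v ∂(kap γ), ∀ᵐ x ∂m1, x ∈ sln γ P v → q x (sl γ N v) = 1

lemma vol_sw {γ : ℝ} {P : Set (ℝ × ℝ)} (hP : MeasurableSet P) :
    volume.restrict (Eset γ) (sw P) = volume.restrict (Eset γ) P :=
  (mp_swap_E γ).measure_preimage hP.nullMeasurableSet

lemma HH_le {γ : ℝ} {q : Kernel ℝ ℝ} (hinv : KInvariantMeasure m1 (fun x => q x))
    {P N : Set (ℝ × ℝ)} (hP : MeasurableSet P) (hN : MeasurableSet N) (h : HH γ q P N) :
    ∀ᵐ v ∂(kap γ), m1 (sl γ P v) ≤ m1 (sl γ N v) := by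
  filter_upwards [h] with v hv
  rw [← m1_sln hP]
  exact inv_le q hinv (meas_sln hP v) (meas_sl hN v) hv

lemma HH_cyc {γ : ℝ} (hγ : γ ∈ Ioo 0 Real.pi) {q : Kernel ℝ ℝ} [IsMarkovKernel q]
    (hrev : Reversible1 q) (hinv : KInvariantMeasure m1 (fun x => q x))
    {P N : Set (ℝ × ℝ)} (hP : MeasurableSet P) (hN : MeasurableSet N) (h : HH γ q P N)
    (hle : volume.restrict (Eset γ) N ≤ volume.restrict (Eset γ) P) :
    ∀ᵐ v ∂(kap γ), Cyc q (sln γ P v) (sl γ N v) := by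
  have h1 := HH_le hinv hP hN h
  have hfin : ∫⁻ v, m1 (sl γ P v) ∂(kap γ) ≠ ∞ := by
    rw [← vol_sl hP]
    refine ne_top_of_le_ne_top (vol_E_ne_top hγ) ?_
    exact (measure_mono (subset_univ _)).trans_eq (by simp)
  rw [vol_sl hP, vol_sl hN] at hle
  have h2 := ae_eq_of_ae_le_of_lintegral_le h1 hfin (measurable_m1_sl hN).aemeasurable hle
  filter_upwards [h2, h] with v h2v hv
  exact cyc_of q hrev (meas_sln hP v) (meas_sl hN v) hv (by rw [m1_sln hP]; exact h2v)

lemma HH_cyc2 {γ : ℝ} (hγ : γ ∈ Ioo 0 Real.pi) {q : Kernel ℝ ℝ} [IsMarkovKernel q]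
    (hrev : Reversible1 q) (hinv : KInvariantMeasure m1 (fun x => q x))
    {P N : Set (ℝ × ℝ)} (hP : MeasurableSet P) (hN : MeasurableSet N) (h : HH γ q P N)
    (h' : HH γ q (sw N) (sw P)) :
    (∀ᵐ v ∂(kap γ), Cyc q (sln γ P v) (sl γ N v)) ∧
    (∀ᵐ v ∂(kap γ), Cyc q (sln γ (sw N) v) (sl γ (sw P) v)) := by
  have l : ∀ {P N : Set (ℝ × ℝ)}, MeasurableSet P → MeasurableSet N → HH γ q P N →
      volume.restrict (Eset γ) P ≤ volume.restrict (Eset γ) N := by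
    intro P N hP hN h
    rw [vol_sl hP, vol_sl hN]
    exact lintegral_mono_ae (HH_le hinv hP hN h)
  have l1 := l hP hN h
  have l2 := l (meas_sw hN) (meas_sw hP) h'
  refine ⟨HH_cyc hγ hrev hinv hP hN h ?_, HH_cyc hγ hrev hinv (meas_sw hN) (meas_sw hP) h' ?_⟩
  · rwa [vol_sw hP, vol_sw hN] at l2
  · rwa [vol_sw hP, vol_sw hN]

lemma eq_null {A B : Set ℝ} (hA : m1 A = 0) (hB : m1 B = 0) : ∀ᵐ x ∂m1, (x ∈ A ↔ x ∈ B) := by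
  filter_upwards [measure_eq_zero_iff_ae_notMem.1 hA, measure_eq_zero_iff_ae_notMem.1 hB] with x h1 h2
  exact iff_of_false h1 h2

lemma eq_full {A B : Set ℝ} (mA : MeasurableSet A) (mB : MeasurableSet B)
    (hA : m1 A = 1) (hB : m1 B = 1) : ∀ᵐ x ∂m1, (x ∈ A ↔ x ∈ B) := by
  have h1 : ∀ᵐ x ∂m1, x ∈ A := (prob_compl_eq_zero_iff mA).2 hA
  have h2 : ∀ᵐ x ∂m1, x ∈ B := (prob_compl_eq_zero_iff mB).2 hB
  filter_upwards [h1, h2] with x h1 h2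
  exact iff_of_true h1 h2

lemma slice_of_ae {γ : ℝ} {P N : Set (ℝ × ℝ)} (hP : MeasurableSet P) (hN : MeasurableSet N)
    (h : ∀ᵐ v ∂(kap γ), ∀ᵐ x ∂m1, (x ∈ sl γ P v ↔ x ∈ sl γ N v)) :
    ∀ᵐ v ∂(kap γ), ∀ᵐ x ∂m1, (x ∈ sl γ (sw P) v ↔ x ∈ sl γ (sw N) v) := by
  have key : ∀ᵐ z ∂(volume.restrict (Eset γ)), (z ∈ P ↔ z ∈ N) :=
    ae_E_of (p := fun z => (z ∈ P ↔ z ∈ N)) (hP.iff hN) h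
  have key2 : ∀ᵐ z ∂(volume.restrict (Eset γ)), (z ∈ sw P ↔ z ∈ sw N) :=
    (mp_swap_E γ).quasiMeasurePreserving.ae (p := fun z => (z ∈ P ↔ z ∈ N)) key
  exact ae_E_to (p := fun z => (z ∈ sw P ↔ z ∈ sw N)) key2

lemma HH_congr {γ : ℝ} {q : Kernel ℝ ℝ} (hinv : KInvariantMeasure m1 (fun x => q x))
    {P N P' N' : Set (ℝ × ℝ)} (hN : MeasurableSet N) (hN' : MeasurableSet N')
    (h : HH γ q P N)
    (hPP : ∀ᵐ v ∂(kap γ), ∀ᵐ x ∂m1, (x ∈ sl γ P v ↔ x ∈ sl γ P' v))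
    (hNN : ∀ᵐ v ∂(kap γ), ∀ᵐ x ∂m1, (x ∈ sl γ N v ↔ x ∈ sl γ N' v)) : HH γ q P' N' := by
  filter_upwards [h, hPP, hNN] with v hv h1 h2
  refine cyc_congr q hinv (meas_sl hN v) (meas_sl hN' v) (A := sln γ P v) (A' := sln γ P' v) ?_ ?_ hv
  · filter_upwards [ae_neg_m1 h1] with x hx using propext hx
  · filter_upwards [h2] with x hx using propext hx



lemma HH_core {γ : ℝ} (hγ : γ ∈ Ioo 0 Real.pi) {q : Kernel ℝ ℝ} [IsMarkovKernel q]
    (hrev : Reversible1 q) (herg : KErgodicMeasure m1 (fun x => q x))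
    {P N : Set (ℝ × ℝ)} (hP : MeasurableSet P) (hN : MeasurableSet N) (h : HH γ q P N)
    (h' : HH γ q (sw N) (sw P)) :
    HH γ q (rf γ N) (rf γ P) ∧ HH γ q (sw (rf γ P)) (sw (rf γ N)) := by
  obtain ⟨h1, h2⟩ := HH_cyc2 hγ hrev herg.1 hP hN h h'
  constructor
  · filter_upwards [h1] with v hv
    rw [sln_rf, sl_rf]
    exact hv.2
  by_cases hV3 : ∀ᵐ v ∂(kap γ), m1 (sln γ P v) = 0 ∨ m1 (sln γ P v) = 1
  · have eqs : ∀ᵐ v ∂(kap γ), (∀ᵐ x ∂m1, (x ∈ sl γ P v ↔ x ∈ sl γ (rf γ N) v)) ∧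
        (∀ᵐ x ∂m1, (x ∈ sl γ N v ↔ x ∈ sl γ (rf γ P) v)) := by
      filter_upwards [hV3, h1] with v hv hc
      rw [sl_rf, sl_rf]
      have e1 := m1_sln (γ := γ) hP v
      have e2 := m1_sln (γ := γ) hN v
      rcases cyc_tri q herg (meas_sln hP v) (meas_sl hN v) hc with ⟨a, b⟩ | ⟨a, b⟩ | ⟨-, a, b, -⟩
      · exact ⟨eq_null (e1.symm.trans a) (e2.trans b), eq_null b a⟩
      · exact ⟨eq_full (meas_sl hP v) (meas_sln hN v) (e1.symm.trans a) (e2.trans b),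
          eq_full (meas_sl hN v) (meas_sln hP v) b a⟩
      · rcases hv with hv | hv
        · exact absurd hv a
        · exact absurd hv b
    exact HH_congr herg.1 (meas_sw hP) (meas_sw (meas_rf hN)) h'
      (slice_of_ae hN (meas_rf hP) (eqs.mono fun v hv => hv.2))
      (slice_of_ae hP (meas_rf hN) (eqs.mono fun v hv => hv.1))
  -- main case
  obtain ⟨v0, hc0, h00, h01⟩ : ∃ v0, Cyc q (sln γ P v0) (sl γ N v0) ∧ m1 (sln γ P v0) ≠ 0 ∧
      m1 (sln γ P v0) ≠ 1 := by
    by_contra hcon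
    apply hV3
    filter_upwards [h1] with v hv
    by_contra hne
    rw [not_or] at hne
    exact hcon ⟨v, hv, hne.1, hne.2⟩
  have mC1 := meas_sln (γ := γ) hP v0
  have mC2 := meas_sl (γ := γ) hN v0
  have hcompl : sln γ P v0 =ᵐ[m1] (sl γ N v0)ᶜ := by
    rcases cyc_tri q herg mC1 mC2 hc0 with ⟨a, b⟩ | ⟨a, b⟩ | ⟨c, -⟩
    · exact absurd a h00
    · exact absurd a h01
    · filter_upwards [c] with x hx
      have hx' : x ∈ sl γ N v0 ↔ ¬ x ∈ sln γ P v0 := iff_of_eq hx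
      exact propext ((not_iff_comm.1 hx'.symm).symm)
  set C1 := sln γ P v0 with hC1
  set C2 := sl γ N v0 with hC2
  -- classification of the u-slices
  have cu : ∀ᵐ u ∂(kap γ), (∀ᵐ x ∂m1, x ∉ sl γ (sw P) u) ∨ (∀ᵐ x ∂m1, x ∈ sl γ (sw P) u) ∨
      (∀ᵐ x ∂m1, (x ∈ sl γ (sw P) u ↔ x ∈ C1)) ∨ (∀ᵐ x ∂m1, (x ∈ sl γ (sw P) u ↔ x ∉ C1)) := by
    filter_upwards [h2] with u hu
    have mA := meas_sln (γ := γ) (meas_sw hN) u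
    have mB := meas_sl (γ := γ) (meas_sw hP) u
    rcases cyc_tri q herg mA mB hu with ⟨a, b⟩ | ⟨a, b⟩ | ⟨c, -⟩
    · exact Or.inl (measure_eq_zero_iff_ae_notMem.1 b)
    · exact Or.inr (Or.inl ((prob_compl_eq_zero_iff mB).2 b))
    · rcases cyc_unique q herg mA mB mC2 mC1 hu hc0.symm c hcompl with k | k
      · right; right; left
        filter_upwards [k] with x hx using iff_of_eq hx
      · right; right; right
        filter_upwards [k] with x hx using iff_of_eq hx
  -- classification of the v-slices
  have cv : ∀ᵐ v ∂(kap γ), (m1 (sln γ P v) = 0 ∨ m1 (sln γ P v) = 1) ∨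
      (∀ᵐ x ∂m1, (x ∈ sl γ P v ↔ -x ∈ C1)) ∨ (∀ᵐ x ∂m1, (x ∈ sl γ P v ↔ -x ∉ C1)) := by
    filter_upwards [h1] with v hv
    have mA := meas_sln (γ := γ) hP v
    have mB := meas_sl (γ := γ) hN v
    have hcv : ∀ x, -x ∈ sln γ P v ↔ x ∈ sl γ P v := by
      intro x; simp only [sln, sl, mem_ofPred_eq, neg_neg]
    rcases cyc_tri q herg mA mB hv with ⟨a, b⟩ | ⟨a, b⟩ | ⟨c, -⟩
    · exact Or.inl (Or.inl a)
    · exact Or.inl (Or.inr a)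
    · right
      have c' : sln γ P v =ᵐ[m1] (sl γ N v)ᶜ := by
        filter_upwards [c] with x hx
        have hx' : x ∈ sl γ N v ↔ ¬ x ∈ sln γ P v := iff_of_eq hx
        exact propext ((not_iff_comm.1 hx'.symm).symm)
      rcases cyc_unique q herg mB mA mC2 mC1 hv.symm hc0.symm c' hcompl with k | k
      · left
        have k' : ∀ᵐ x ∂m1, (x ∈ sln γ P v ↔ x ∈ C1) := by
          filter_upwards [k] with x hx using iff_of_eq hx
        filter_upwards [ae_neg_m1 k'] with x hx
        rw [← hcv, hx]
      · right
        have k' : ∀ᵐ x ∂m1, (x ∈ sln γ P v ↔ x ∉ C1) := by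
          filter_upwards [k] with x hx using iff_of_eq hx
        filter_upwards [ae_neg_m1 k'] with x hx
        rw [← hcv, hx]
  have mD : MeasurableSet {x : ℝ | -x ∈ C1} := measurable_neg mC1
  have eD : m1 {x : ℝ | -x ∈ C1} = m1 C1 := mp_neg_m1.measure_preimage mC1.nullMeasurableSet
  have reg : Real.cos γ = 0 ∧ ∀ᵐ x ∂m1, (-x ∈ C1 ↔ x ∉ C1) := by
    by_cases k1 : kap γ {v | ∀ᵐ x ∂m1, ((ellMap γ v x, v) ∈ P ↔ x ∈ {x : ℝ | -x ∈ C1})} = 0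
    · have k2 : kap γ {v | ∀ᵐ x ∂m1, ((ellMap γ v x, v) ∈ P ↔ x ∈ {x : ℝ | -x ∈ C1}ᶜ)} ≠ 0 := by
        intro k2
        apply hV3
        filter_upwards [cv, measure_eq_zero_iff_ae_notMem.1 k1, measure_eq_zero_iff_ae_notMem.1 k2]
          with v hv n1 n2
        rcases hv with hv | hv | hv
        · exact hv
        · exact absurd hv n1
        · exact absurd hv n2
      obtain ⟨r1, r2⟩ := reg_global hγ hP mC1 mD.compl cu k2
        (by rw [Ne, prob_compl_eq_zero_iff mD, eD]; exact h01)
        (by rw [Ne, prob_compl_eq_one_iff mD, eD]; exact h00)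
      refine ⟨r1, ?_⟩
      filter_upwards [r2] with x hx
      simp only [mem_compl_iff, mem_ofPred_eq, neg_neg, not_not] at hx
      exact hx.symm
    · obtain ⟨r1, r2⟩ := reg_global hγ hP mC1 mD cu k1 (by rw [eD]; exact h00) (by rw [eD]; exact h01)
      refine ⟨r1, ?_⟩
      filter_upwards [r2] with x hx
      simp only [mem_ofPred_eq, neg_neg] at hx
      exact (not_iff_comm.1 hx.symm).symm
  obtain ⟨hcos, hC1n⟩ := reg
  -- slices of the swapped sets agree
  have eqs : ∀ᵐ u ∂(kap γ), ∀ᵐ x ∂m1, (x ∈ sl γ (sw N) u ↔ x ∈ sl γ (sw P) u) := by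
    filter_upwards [h2] with u hu
    have mA := meas_sln (γ := γ) (meas_sw hN) u
    have mB := meas_sl (γ := γ) (meas_sw hP) u
    have mN := meas_sl (γ := γ) (meas_sw hN) u
    have e2 := m1_sln (γ := γ) (meas_sw hN) u
    rcases cyc_tri q herg mA mB hu with ⟨a, b⟩ | ⟨a, b⟩ | ⟨c, -⟩
    · exact eq_null (e2.symm.trans a) b
    · exact eq_full mN mB (e2.symm.trans a) b
    · have c' : ∀ᵐ x ∂m1, (x ∈ sl γ (sw P) u ↔ ¬ x ∈ sln γ (sw N) u) := by
        filter_upwards [c] with x hx using iff_of_eq hx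
      have hcv : ∀ x, -x ∈ sln γ (sw N) u ↔ x ∈ sl γ (sw N) u := by
        intro x; simp only [sln, sl, mem_ofPred_eq, neg_neg]
      have k' : ∀ᵐ x ∂m1, (-x ∈ sl γ (sw P) u ↔ ¬ x ∈ sl γ (sw P) u) := by
        rcases cyc_unique q herg mA mB mC2 mC1 hu hc0.symm c hcompl with k | k
        · have k' : ∀ᵐ x ∂m1, (x ∈ sl γ (sw P) u ↔ x ∈ C1) := by
            filter_upwards [k] with x hx using iff_of_eq hx
          filter_upwards [k', ae_neg_m1 k', hC1n] with x x1 x2 x3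
          rw [x1, x2, x3]
        · have k' : ∀ᵐ x ∂m1, (x ∈ sl γ (sw P) u ↔ x ∉ C1) := by
            filter_upwards [k] with x hx using iff_of_eq hx
          filter_upwards [k', ae_neg_m1 k', hC1n] with x x1 x2 x3
          rw [x1, x2, x3]
      filter_upwards [k', ae_neg_m1 c'] with x x1 x2
      rw [← hcv]
      rw [x1] at x2
      exact (not_iff_not.1 x2).symm
  have fin : HH γ q (sw P) (sw N) :=
    HH_congr herg.1 (meas_sw hP) (meas_sw hN) h' eqs
      (eqs.mono fun u hu => hu.mono fun x hx => hx.symm)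
  have hneg : ∀ u x, ellMap γ (-u) x = ellMap γ u x := by
    intro u x; simp [ellMap, hcos]
  have i1 : ∀ (S : Set (ℝ × ℝ)) (u : ℝ), sl γ (sw (rf γ S)) u = sl γ (sw S) (-u) := by
    intro S u
    ext x
    simp only [sl, sw, rf, mem_ofPred_eq, mem_preimage, Prod.swap_prod_mk, refl0, hneg, hcos,
      mul_zero, sub_zero]
  have i2 : ∀ (S : Set (ℝ × ℝ)) (u : ℝ), sln γ (sw (rf γ S)) u = sln γ (sw S) (-u) := by
    intro S u
    rw [sln_eq, sln_eq, i1]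
  filter_upwards [ae_neg_kap fin] with u hu
  rw [i1, i2]
  exact hu



lemma HH_iff {γ : ℝ} {q : Kernel ℝ ℝ} [IsMarkovKernel q]
    {P N : Set (ℝ × ℝ)} (hP : MeasurableSet P) (hN : MeasurableSet N) :
    HH γ q P N ↔ ∀ᵐ z ∂(volume.restrict (Eset γ)), z ∈ P →
      q (-ellInv γ z.2 z.1) (sl γ N z.2) = 1 := by
  have hm : Measurable (fun z : ℝ × ℝ => -ellInv γ z.2 z.1) :=
    ((measurable_ellInv γ).comp measurable_swap).neg
  have hmeas : MeasurableSet {z : ℝ × ℝ | z ∈ P → q (-ellInv γ z.2 z.1) (sl γ N z.2) = 1} := by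
    have hf : Measurable (fun z : ℝ × ℝ => q (-ellInv γ z.2 z.1) (sl γ N z.2)) := by
      have ht : MeasurableSet {p : (ℝ × ℝ) × ℝ | (ellMap γ p.1.2 p.2, p.1.2) ∈ N} := by
        have : Measurable (fun p : (ℝ × ℝ) × ℝ => (p.1.2, p.2)) := by fun_prop
        exact ((measurable_chart γ).comp this) hN
      exact Kernel.measurable_kernel_prodMk_left (κ := q.comap _ hm) ht
    have h1 : MeasurableSet {z : ℝ × ℝ | q (-ellInv γ z.2 z.1) (sl γ N z.2) = 1} :=
      hf (measurableSet_singleton 1)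
    convert hP.compl.union h1 using 1
    ext z
    simp only [mem_ofPred_eq, mem_union, mem_compl_iff, imp_iff_not_or]
  constructor
  · intro h
    apply ae_E_of hmeas
    filter_upwards [h, kap_ae_pos γ] with v hv hpos
    filter_upwards [ae_neg_m1 hv] with x hx hxP
    simp only [ellInv_ellMap hpos]
    apply hx
    simpa only [sln, mem_ofPred_eq, neg_neg] using hxP
  · intro h
    filter_upwards [ae_E_to h, kap_ae_pos γ] with v hv hpos
    filter_upwards [ae_neg_m1 hv] with x hx hxP
    simp only [ellInv_ellMap hpos, neg_neg] at hx
    exact hx hxP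

/-- inclusion of a sheet -/
def sheet (s : ℝ) (z : ℝ × ℝ) : ℝ × ℝ × ℝ := (z.1, z.2, s)

lemma sheet_emb (s : ℝ) : MeasurableEmbedding (sheet s) :=
  (MeasurableEquiv.prodAssoc (α := ℝ) (β := ℝ) (γ := ℝ)).measurableEmbedding.comp
    (measurableEmbedding_prod_mk_right s)

lemma m2_eq (γ : ℝ) : m2 γ = ((volume (Eset γ))⁻¹ * 2⁻¹) •
    ((volume.restrict (Eset γ)).map (sheet 1) + (volume.restrict (Eset γ)).map (sheet (-1))) := by
  have hm : Measurable (fun p : (ℝ × ℝ) × ℝ => (p.1.1, p.1.2, p.2)) := by fun_prop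
  unfold m2
  rw [Measure.prod_smul_left, Measure.prod_smul_right, Measure.prod_add, Measure.prod_dirac,
    Measure.prod_dirac, smul_smul, Measure.map_smul, Measure.map_add _ _ hm,
    Measure.map_map hm (by fun_prop), Measure.map_map hm (by fun_prop)]
  rfl

lemma E_vol_ne_zero (γ : ℝ) : volume (Eset γ) ≠ 0 :=
  ((isOpen_E γ).measure_pos volume ⟨(0, 0), by simp [Eset]⟩).ne'

lemma ae_m2 {γ : ℝ} (hγ : γ ∈ Ioo 0 Real.pi) {p : ℝ × ℝ × ℝ → Prop} :
    (∀ᵐ w ∂(m2 γ), p w) ↔ (∀ᵐ z ∂(volume.restrict (Eset γ)), p (z.1, z.2, 1)) ∧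
      (∀ᵐ z ∂(volume.restrict (Eset γ)), p (z.1, z.2, -1)) := by
  rw [m2_eq, Measure.ae_ennreal_smul_measure_iff, ae_add_measure_iff, (sheet_emb 1).ae_map_iff,
    (sheet_emb (-1)).ae_map_iff]
  · rfl
  · exact mul_ne_zero (ENNReal.inv_ne_zero.2 (vol_E_ne_top hγ)) (by simp)

lemma m2_apply {γ : ℝ} {S : Set (ℝ × ℝ × ℝ)} :
    m2 γ S = ((volume (Eset γ))⁻¹ * 2⁻¹) * (volume.restrict (Eset γ) (Fplus S) +
      volume.restrict (Eset γ) (Fminus S)) := by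
  rw [m2_eq, Measure.smul_apply, Measure.add_apply, (sheet_emb 1).map_apply,
    (sheet_emb (-1)).map_apply]
  rfl

lemma meas_Fplus {S : Set (ℝ × ℝ × ℝ)} (hS : MeasurableSet S) : MeasurableSet (Fplus S) :=
  (sheet_emb 1).measurable hS

lemma meas_Fminus {S : Set (ℝ × ℝ × ℝ)} (hS : MeasurableSet S) : MeasurableSet (Fminus S) :=
  (sheet_emb (-1)).measurable hS

lemma inv_iff {γ : ℝ} (hγ : γ ∈ Ioo 0 Real.pi) {q : Kernel ℝ ℝ} [IsMarkovKernel q]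
    {F : Set (ℝ × ℝ × ℝ)} (hF : MeasurableSet F) :
    KInvariantSet (m2 γ) (Qfun γ q) F ↔
      HH γ q (Fminus F) (Fplus F) ∧ HH γ q (sw (Fplus F)) (sw (Fminus F)) := by
  have hp := meas_Fplus hF
  have hn := meas_Fminus hF
  have hl : ∀ v : ℝ, Measurable (fun x => ellMap γ v x) := fun v => by unfold ellMap; fun_prop
  unfold KInvariantSet
  rw [ae_m2 hγ, HH_iff hn hp, HH_iff (meas_sw hp) (meas_sw hn), and_comm]
  have e1 : ∀ z : ℝ × ℝ, Qfun γ q (z.1, z.2, -1) F =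
      q (-ellInv γ z.2 z.1) (sl γ (Fplus F) z.2) := by
    intro z
    simp only [Qfun, if_true]
    rw [Measure.map_apply (by have := hl z.2; fun_prop) hF]
    rfl
  have e2 : ∀ z : ℝ × ℝ, Qfun γ q (z.1, z.2, 1) F =
      q (-ellInv γ z.1 z.2) (sl γ (sw (Fminus F)) z.1) := by
    intro z
    have : ¬ ((1 : ℝ) = -1) := by norm_num
    simp only [Qfun, if_neg this]
    rw [Measure.map_apply (by have := hl z.1; fun_prop) hF]
    rfl
  simp only [e1, e2]
  refine and_congr Iff.rfl ?_
  constructor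
  · intro h
    exact (mp_swap_E γ).quasiMeasurePreserving.ae
      (p := fun z => (z.1, z.2, (1 : ℝ)) ∈ F → q (-ellInv γ z.1 z.2) (sl γ (sw (Fminus F)) z.1) = 1) h
  · intro h
    exact (mp_swap_E γ).quasiMeasurePreserving.ae
      (p := fun z => z ∈ sw (Fplus F) → q (-ellInv γ z.2 z.1) (sl γ (sw (Fminus F)) z.2) = 1) h

lemma erg_image {X : Type*} [MeasurableSpace X] {μ : Measure X} {p : X → Measure X} {T : X → X}
    (hT : Function.Involutive T) (hTm : Measurable T)
    (hμ : ∀ S, MeasurableSet S → μ (T ⁻¹' S) = μ S)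
    (hinv : ∀ S, MeasurableSet S → KInvariantSet μ p S → KInvariantSet μ p (T ⁻¹' S))
    {F : Set X} (hF : KErgodicSet μ p F) : KErgodicSet μ p (T '' F) := by
  have e : T '' F = T ⁻¹' F := image_eq_preimage_of_inverse hT hT ▸ rfl
  rw [e]
  obtain ⟨mF, iF, eF⟩ := hF
  refine ⟨hTm mF, hinv F mF iF, fun B hB mB iB => ?_⟩
  have := eF (T ⁻¹' B) (by
    intro x hx
    have := hB hx
    rwa [mem_preimage, hT x] at this) (hTm mB) (hinv B mB iB)
  rwa [hμ B mB, ← hμ F mF] at this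

lemma T0_inv (γ : ℝ) : Function.Involutive (T0 γ) := by
  rintro ⟨u, v, s⟩
  simp only [T0, neg_neg, Prod.mk.injEq, and_true]
  ring

lemma T1_inv (γ : ℝ) : Function.Involutive (T1 γ) := by
  rintro ⟨u, v, s⟩
  simp only [T1, neg_neg, Prod.mk.injEq, and_true, true_and]
  ring

lemma T0_plus (γ : ℝ) (S : Set (ℝ × ℝ × ℝ)) : Fplus (T0 γ ⁻¹' S) = rf γ (Fminus S) := rfl

lemma T0_minus (γ : ℝ) (S : Set (ℝ × ℝ × ℝ)) : Fminus (T0 γ ⁻¹' S) = rf γ (Fplus S) := by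
  ext z; simp only [Fminus, Fplus, rf, T0, refl0, mem_ofPred_eq, mem_preimage, neg_neg]

lemma T1_plus (γ : ℝ) (S : Set (ℝ × ℝ × ℝ)) :
    Fplus (T1 γ ⁻¹' S) = sw (rf γ (sw (Fminus S))) := rfl

lemma T1_minus (γ : ℝ) (S : Set (ℝ × ℝ × ℝ)) :
    Fminus (T1 γ ⁻¹' S) = sw (rf γ (sw (Fplus S))) := by
  ext ⟨u, v⟩
  simp only [Fminus, Fplus, rf, sw, T1, refl0, mem_ofPred_eq, mem_preimage, neg_neg,
    Prod.swap_prod_mk]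

lemma sw_sw (S : Set (ℝ × ℝ)) : sw (sw S) = S := rfl

lemma vol_rf {γ : ℝ} {P : Set (ℝ × ℝ)} (hP : MeasurableSet P) :
    volume.restrict (Eset γ) (rf γ P) = volume.restrict (Eset γ) P :=
  (mp_refl0_E γ).measure_preimage hP.nullMeasurableSet

/-- images of `(m²,Q)`-ergodic sets under `T₀` and `T₁` are `(m²,Q)`-ergodic. -/
theorem ergodic_sets_preserved (γ : ℝ) (hγ : γ ∈ Ioo 0 Real.pi)
    (q : Kernel ℝ ℝ) (hq : IsMarkovOnInterval q)
    (hrev : Reversible1 q)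
    (herg : KErgodicMeasure m1 (fun x => q x))
    (F : Set (ℝ × ℝ × ℝ)) (hFsub : F ⊆ EstarSet γ)
    (hF : KErgodicSet (m2 γ) (Qfun γ q) F) :
    KErgodicSet (m2 γ) (Qfun γ q) (T0 γ '' F) ∧
    KErgodicSet (m2 γ) (Qfun γ q) (T1 γ '' F) := by
  haveI := hq.1
  constructor
  · refine erg_image (T0_inv γ) (by unfold T0; fun_prop) ?_ ?_ hF
    · intro S hS
      have hp := meas_Fplus hS
      have hn := meas_Fminus hS
      rw [m2_apply, m2_apply, T0_plus, T0_minus, vol_rf hp, vol_rf hn, add_comm]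
    · intro S hS hi
      have hp := meas_Fplus hS
      have hn := meas_Fminus hS
      have hm : Measurable (T0 γ) := by unfold T0; fun_prop
      rw [inv_iff hγ hS] at hi
      rw [inv_iff hγ (hm hS), T0_plus, T0_minus]
      exact HH_core hγ hrev herg hn hp hi.1 hi.2
  · refine erg_image (T1_inv γ) (by unfold T1; fun_prop) ?_ ?_ hF
    · intro S hS
      have hp := meas_sw (meas_Fplus hS)
      have hn := meas_sw (meas_Fminus hS)
      rw [m2_apply, m2_apply, T1_plus, T1_minus, vol_sw (meas_rf hp), vol_sw (meas_rf hn),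
        vol_rf hp, vol_rf hn, vol_sw (meas_Fplus hS), vol_sw (meas_Fminus hS), add_comm]
    · intro S hS hi
      have hp := meas_sw (meas_Fplus hS)
      have hn := meas_sw (meas_Fminus hS)
      have hm : Measurable (T1 γ) := by unfold T1; fun_prop
      rw [inv_iff hγ hS] at hi
      rw [inv_iff hγ (hm hS), T1_plus, T1_minus, sw_sw, sw_sw]
      exact (HH_core hγ hrev herg hp hn hi.2 hi.1).symm
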